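/- Let (u, π, v, θ) be a smooth solution of the stationary 3D tropical climate model. Suppose p ∈ [3, 9/2], q ∈ [1, 2p′), r ∈ [1, 2p′) where p′ = p/(p−1), and u ∈ L^p(ℝ³), v ∈ L^q(ℝ³), θ ∈ L^r(ℝ³). Then u = 0, v = 0 and θ = 0 identically on ℝ³. -/

import Mathlib

open MeasureTheory Filter Metric

noncomputable section

abbrev R3 : Type := EuclideanSpace ℝ (Fin 3)

/-- Partial derivative of `f` in the `j`-th coordinate direction. -/
def pd (f : R3 → ℝ) (j : Fin 3) (x : R3) : ℝ :=
  fderiv ℝ f x (EuclideanSpace.single j 1)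

/-- Laplacian of `f`. -/
def lap (f : R3 → ℝ) (x : R3) : ℝ := ∑ j, pd (pd f j) j x

/-- The stationary 3D tropical climate model:
`-Δu + (u·∇)u + ∇π + div(v⊗v) = 0`, `-Δv + (u·∇)v + ∇θ + (v·∇)u = 0`,
`-Δθ + u·∇θ + div v = 0`, `div u = 0`. -/
def TCM (u v : R3 → R3) (pr θ : R3 → ℝ) : Prop :=
  (∀ i x, -lap (fun y => u y i) x + (∑ j, u x j * pd (fun y => u y i) j x)
      + pd pr i x + (∑ j, pd (fun y => v y j * v y i) j x) = 0) ∧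
  (∀ i x, -lap (fun y => v y i) x + (∑ j, u x j * pd (fun y => v y i) j x)
      + pd θ i x + (∑ j, v x j * pd (fun y => u y i) j x) = 0) ∧
  (∀ x, -lap θ x + (∑ j, u x j * pd θ j x) + (∑ j, pd (fun y => v y j) j x) = 0) ∧
  (∀ x, (∑ j, pd (fun y => u y j) j x) = 0)


abbrev Sm (f : R3 → ℝ) : Prop := ContDiff ℝ (⊤ : ℕ∞) f

lemma Sm.diff {f : R3 → ℝ} (hf : Sm f) : Differentiable ℝ f := hf.differentiable (by simp)

lemma Sm.cont {f : R3 → ℝ} (hf : Sm f) : Continuous f := hf.continuous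

lemma Sm.pd {f : R3 → ℝ} (hf : Sm f) (j : Fin 3) : Sm (pd f j) := by
  have h : ContDiff ℝ (⊤ : ℕ∞) (fderiv ℝ f) := hf.fderiv_right (by simp)
  exact h.clm_apply contDiff_const

lemma pd_mul {f g : R3 → ℝ} (hf : Sm f) (hg : Sm g) (j : Fin 3) (x : R3) :
    pd (fun y => f y * g y) j x = f x * pd g j x + pd f j x * g x := by
  unfold pd
  rw [show (fun y => f y * g y) = f * g from rfl, fderiv_mul (hf.diff x) (hg.diff x)]
  simp; ring

lemma pd_add {f g : R3 → ℝ} (hf : Sm f) (hg : Sm g) (j : Fin 3) (x : R3) :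
    pd (fun y => f y + g y) j x = pd f j x + pd g j x := by
  unfold pd
  rw [show (fun y => f y + g y) = f + g from rfl, fderiv_add (hf.diff x) (hg.diff x)]
  simp

lemma pd_sub {f g : R3 → ℝ} (hf : Sm f) (hg : Sm g) (j : Fin 3) (x : R3) :
    pd (fun y => f y - g y) j x = pd f j x - pd g j x := by
  unfold pd
  rw [show (fun y => f y - g y) = f - g from rfl, fderiv_sub (hf.diff x) (hg.diff x)]
  simp

lemma pd_cmul {f : R3 → ℝ} (hf : Sm f) (c : ℝ) (j : Fin 3) (x : R3) :
    pd (fun y => c * f y) j x = c * pd f j x := by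
  have := pd_mul (f := fun _ => c) contDiff_const hf j x
  rw [this]; simp [pd]

lemma pd_sum {f : Fin 3 → R3 → ℝ} (hf : ∀ i, Sm (f i)) (j : Fin 3) (x : R3) :
    pd (fun y => ∑ i, f i y) j x = ∑ i, pd (f i) j x := by
  unfold pd
  rw [fderiv_fun_sum (fun i _ => (hf i).diff x)]
  simp

lemma pd_comm {f : R3 → ℝ} (hf : Sm f) (i j : Fin 3) (x : R3) :
    pd (pd f i) j x = pd (pd f j) i x := by
  have h : ContDiff ℝ (⊤ : ℕ∞) (fderiv ℝ f) := hf.fderiv_right (by simp)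
  have hd : DifferentiableAt ℝ (fderiv ℝ f) x := h.differentiable (by simp) x
  have key : ∀ a b : Fin 3, pd (pd f a) b x =
      fderiv ℝ (fderiv ℝ f) x (EuclideanSpace.single b 1) (EuclideanSpace.single a 1) := by
    intro a b
    unfold pd
    rw [fderiv_clm_apply hd (by fun_prop)]
    simp
  rw [key, key]
  have hs : IsSymmSndFDerivAt ℝ f x := by
    apply ContDiffAt.isSymmSndFDerivAt (n := (⊤ : ℕ∞)) hf.contDiffAt
    simp only [minSmoothness_of_isRCLikeNormedField]
    exact WithTop.coe_le_coe.mpr (le_top : (2 : ℕ∞) ≤ ⊤)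
  exact hs.eq _ _

lemma pd_cs {f : R3 → ℝ} (hf : HasCompactSupport f) (j : Fin 3) : HasCompactSupport (pd f j) := by
  have := hf.fderiv (𝕜 := ℝ)
  exact this.comp_left (g := fun L : R3 →L[ℝ] ℝ => L (EuclideanSpace.single j 1)) (by simp)

lemma pd_tsupport (f : R3 → ℝ) (j : Fin 3) : tsupport (pd f j) ⊆ tsupport f := by
  refine closure_minimal ?_ isClosed_closure
  intro x hx
  by_contra hn
  apply hx
  have : fderiv ℝ f x = 0 := by
    by_contra h0
    exact hn (support_fderiv_subset ℝ h0)
  simp [pd, this]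

/-- integration by parts -/
lemma ibp {f g : R3 → ℝ} (hf : Sm f) (hg : Sm g) (hc : HasCompactSupport g) (j : Fin 3) :
    ∫ x, f x * pd g j x = - ∫ x, pd f j x * g x := by
  apply integral_mul_fderiv_eq_neg_fderiv_mul_of_integrable
  · exact ((hf.pd j).cont.mul hg.cont).integrable_of_hasCompactSupport hc.mul_left
  · exact (hf.cont.mul (hg.pd j).cont).integrable_of_hasCompactSupport (pd_cs hc j).mul_left
  · exact (hf.cont.mul hg.cont).integrable_of_hasCompactSupport hc.mul_left
  · intro x _; exact hf.diff x
  · intro x _; exact hg.diff x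

lemma int_pd {g : R3 → ℝ} (hg : Sm g) (hc : HasCompactSupport g) (j : Fin 3) :
    ∫ x, pd g j x = 0 := by
  have := ibp (f := fun _ => 1) contDiff_const hg hc j
  simpa [pd] using this

abbrev CB (r : ℝ) : Set R3 := closedBall (0 : R3) r

lemma intOn {f : R3 → ℝ} (hf : Continuous f) (r : ℝ) : IntegrableOn f (CB r) :=
  hf.continuousOn.integrableOn_compact (isCompact_closedBall _ _)

lemma csb {f : R3 → ℝ} {r : ℝ} (h : tsupport f ⊆ CB r) : HasCompactSupport f :=
  (isCompact_closedBall (0:R3) r).of_isClosed_subset isClosed_closure h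

lemma int_eq_setInt {f : R3 → ℝ} {r : ℝ} (h : ∀ x, x ∉ CB r → f x = 0) :
    ∫ x, f x = ∫ x in CB r, f x := (setIntegral_eq_integral_of_forall_compl_eq_zero h).symm

/-- Cauchy–Schwarz -/
lemma cs_gen {Ω : Type*} [MeasurableSpace Ω] {μ : Measure Ω} {f g : Ω → ℝ}
    (hf : Integrable (fun x => f x ^ 2) μ) (hg : Integrable (fun x => g x ^ 2) μ)
    (hfg : Integrable (fun x => f x * g x) μ) :
    (∫ x, f x * g x ∂μ) ^ 2 ≤ (∫ x, f x ^ 2 ∂μ) * ∫ x, g x ^ 2 ∂μ := by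
  have h : ∀ t : ℝ, 0 ≤ (∫ x, g x ^ 2 ∂μ) * (t * t) + (2 * ∫ x, f x * g x ∂μ) * t
      + ∫ x, f x ^ 2 ∂μ := by
    intro t
    have e : (∫ x, g x ^ 2 ∂μ) * (t * t) + (2 * ∫ x, f x * g x ∂μ) * t + ∫ x, f x ^ 2 ∂μ
        = ∫ x, (f x + t * g x) ^ 2 ∂μ := by
      have : (fun x => (f x + t * g x) ^ 2) =
          fun x => ((t * t) * g x ^ 2 + (2 * t) * (f x * g x)) + f x ^ 2 := by
        ext x; ring
      have h1 : Integrable (fun x => (t * t) * g x ^ 2) μ := hg.const_mul _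
      have h2 : Integrable (fun x => (2 * t) * (f x * g x)) μ := hfg.const_mul _
      have h3 : Integrable (fun x => (t * t) * g x ^ 2 + (2 * t) * (f x * g x)) μ := h1.add h2
      rw [this, integral_add h3 hf, integral_add h1 h2, integral_const_mul, integral_const_mul]
      ring
    rw [e]
    exact integral_nonneg fun x => sq_nonneg _
  have := discrim_le_zero h
  unfold discrim at this
  nlinarith

/-- convolution with a measure -/
def cvm (m : Measure R3) (f : R3 → ℝ) (x : R3) : ℝ := ∫ y, f (x - y) ∂m

lemma cvm_eq (m : Measure R3) (f : R3 → ℝ) :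
    cvm m f = convolution (fun _ : R3 => (1:ℝ)) f (ContinuousLinearMap.lsmul ℝ ℝ) m := by
  ext x; simp [cvm, convolution]

lemma cvm_sm (m : Measure R3) [IsFiniteMeasure m] {f : R3 → ℝ} (hf : Sm f)
    (hc : HasCompactSupport f) : Sm (cvm m f) := by
  rw [cvm_eq]
  exact hc.contDiff_convolution_right _ (locallyIntegrable_const _) hf

lemma cvm_pd (m : Measure R3) [IsFiniteMeasure m] {f : R3 → ℝ} (hf : Sm f)
    (hc : HasCompactSupport f) (j : Fin 3) : pd (cvm m f) j = cvm m (pd f j) := by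
  ext x
  have h1 : ContDiff ℝ 1 f := hf.of_le (by exact_mod_cast le_top)
  have hdc : Continuous (fderiv ℝ f) := h1.continuous_fderiv one_ne_zero
  obtain ⟨C, hC⟩ := (hc.fderiv ℝ).exists_bound_of_continuous hdc
  obtain ⟨C', hC'⟩ := hc.exists_bound_of_continuous hf.cont
  have hi : Integrable (fun y => fderiv ℝ f (x - y)) m :=
    Integrable.of_bound (hdc.comp (by fun_prop)).aestronglyMeasurable C
      (Filter.Eventually.of_forall fun q => hC _)
  have h3 : ∀ x t, HasFDerivAt (fun x => f (x - t)) (fderiv ℝ f (x - t)) x := fun x t => by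
    have := (hf.diff (x - t)).hasFDerivAt.comp x ((hasFDerivAt_id x).sub (hasFDerivAt_const t x))
    simpa using! this
  have key : HasFDerivAt (fun x => ∫ y, f (x - y) ∂m) (∫ y, fderiv ℝ f (x - y) ∂m) x := by
    apply hasFDerivAt_integral_of_dominated_of_fderiv_le (s := Set.univ) (bound := fun _ => C)
      (F' := fun x y => fderiv ℝ f (x - y)) Filter.univ_mem
    · exact Filter.Eventually.of_forall fun τ => (hf.cont.comp (by fun_prop)).aestronglyMeasurable
    · exact Integrable.of_bound (hf.cont.comp (by fun_prop)).aestronglyMeasurable C'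
        (Filter.Eventually.of_forall fun q => hC' _)
    · exact hi.1
    · exact Filter.Eventually.of_forall fun t x _ => hC _
    · exact integrable_const _
    · exact Filter.Eventually.of_forall fun t x _ => h3 x t
  unfold pd
  have e : fderiv ℝ (cvm m f) x = _ := key.fderiv
  rw [e, ContinuousLinearMap.integral_apply hi]
  rfl

lemma cvm_supp {m : Measure R3} {f : R3 → ℝ} {r s : ℝ} (hm : m (CB s)ᶜ = 0)
    (hf : tsupport f ⊆ CB r) : tsupport (cvm m f) ⊆ CB (r + s) := by
  refine closure_minimal ?_ isClosed_closedBall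
  intro x hx
  by_contra hn
  apply hx
  unfold cvm
  rw [integral_eq_zero_of_ae]
  have : ∀ᵐ y ∂m, y ∈ CB s := by
    rw [ae_iff]; exact hm
  filter_upwards [this] with y hy
  by_contra h0
  have h1 : x - y ∈ CB r := hf (subset_tsupport _ h0)
  simp only [mem_closedBall, dist_zero_right] at hy h1 hn
  apply hn
  calc ‖x‖ = ‖(x - y) + y‖ := by simp
    _ ≤ ‖x - y‖ + ‖y‖ := norm_add_le _ _
    _ ≤ r + s := by linarith

/-- scaled kernel operator -/
def Kop (k : R3 → ℝ) (s : ℝ) (f : R3 → ℝ) (x : R3) : ℝ := ∫ z, k z * f (x - s • z)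

def zt (z : R3) : ℝ := Real.smoothTransition (1 - ‖z‖ ^ 2)
def et (z : R3) : ℝ := 2 * deriv Real.smoothTransition (1 - ‖z‖ ^ 2)

lemma st_sm : ContDiff ℝ (⊤ : ℕ∞) Real.smoothTransition := Real.smoothTransition.contDiff

lemma dst_sm : ContDiff ℝ (⊤ : ℕ∞) (deriv Real.smoothTransition) :=
  (contDiff_infty_iff_deriv.mp st_sm).2

lemma nsq_sm : Sm (fun z : R3 => 1 - ‖z‖ ^ 2) :=
  contDiff_const.sub (contDiff_norm_sq ℝ)

lemma zt_sm : Sm zt := st_sm.comp nsq_sm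
lemma et_sm : Sm et := contDiff_const.mul (dst_sm.comp nsq_sm)

lemma nsq_fderiv (z : R3) : HasFDerivAt (fun z : R3 => ‖z‖ ^ 2) (2 • innerSL ℝ z) z :=
  (hasStrictFDerivAt_norm_sq z).hasFDerivAt

lemma inner_single' (z : R3) (j : Fin 3) : inner ℝ z (EuclideanSpace.single j (1:ℝ)) = z j := by
  simp [EuclideanSpace.inner_single_right]

lemma zt_pd (j : Fin 3) (z : R3) : pd zt j z = - (z j * et z) := by
  have h1 : HasFDerivAt (fun z : R3 => 1 - ‖z‖ ^ 2) (-(2 • innerSL ℝ z)) z :=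
    (nsq_fderiv z).const_sub 1
  have h2 : HasDerivAt Real.smoothTransition (deriv Real.smoothTransition (1 - ‖z‖^2)) (1 - ‖z‖ ^ 2) :=
    (st_sm.differentiable (by simp) _).hasDerivAt
  have h3 := h2.comp_hasFDerivAt z h1
  have h4 : fderiv ℝ zt z = _ := h3.fderiv
  unfold pd
  rw [h4]
  simp [et, inner_single']
  ring

lemma zt_nonneg (z : R3) : 0 ≤ zt z := Real.smoothTransition.nonneg _

lemma st_mono : Monotone Real.smoothTransition := by
  exact Real.smoothTransition.monotone

lemma et_nonneg (z : R3) : 0 ≤ et z :=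
  mul_nonneg (by norm_num) (st_mono.deriv_nonneg)

lemma zt_zero {z : R3} (hz : z ∉ CB 1) : zt z = 0 := by
  apply Real.smoothTransition.zero_of_nonpos
  simp at hz
  nlinarith

lemma et_zero {z : R3} (hz : z ∉ CB 1) : et z = 0 := by
  simp only [mem_closedBall, dist_zero_right, not_le] at hz
  have : Real.smoothTransition =ᶠ[nhds (1 - ‖z‖ ^ 2)] fun _ => 0 := by
    have : Set.Iio (0:ℝ) ∈ nhds (1 - ‖z‖ ^ 2) := Iio_mem_nhds (by nlinarith)
    filter_upwards [this] with y hy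
    exact Real.smoothTransition.zero_of_nonpos hy.le
  simp [et, this.deriv_eq]

lemma tsupp_of {f : R3 → ℝ} {r : ℝ} (h : ∀ z, z ∉ CB r → f z = 0) : tsupport f ⊆ CB r := by
  refine closure_minimal ?_ isClosed_closedBall
  intro x hx
  by_contra hn
  exact hx (h x hn)

lemma zt_cs : HasCompactSupport zt := csb (tsupp_of fun _ => zt_zero)
lemma et_cs : HasCompactSupport et := csb (tsupp_of fun _ => et_zero)
lemma zt_int : Integrable zt := zt_sm.cont.integrable_of_hasCompactSupport zt_cs
lemma et_int : Integrable et := et_sm.cont.integrable_of_hasCompactSupport et_cs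

def c0 : ℝ := ∫ z, et z

lemma c0_pos : 0 < c0 := by
  refine lt_of_le_of_ne (integral_nonneg et_nonneg) ?_
  intro h
  have h1 : et = 0 := by
    have := (integral_eq_zero_iff_of_nonneg et_nonneg et_int).mp h.symm
    exact (Continuous.ae_eq_iff_eq volume et_sm.cont continuous_const).mp this
  have h2 : ∀ x y, zt x = zt y := by
    apply is_const_of_fderiv_eq_zero zt_sm.diff
    intro x
    have : ∀ j, fderiv ℝ zt x (EuclideanSpace.single j 1) = 0 := by
      intro j
      have := zt_pd j x
      rw [h1] at this
      simpa [pd] using this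
    ext v
    have hv : v = ∑ j, v j • EuclideanSpace.single j (1:ℝ) := by
      ext i; simp [Fin.sum_univ_three]; fin_cases i <;> simp
    rw [hv, map_sum]
    simp [this]
  have h3 : zt 0 = 1 := by simp [zt]
  have h4 : zt (EuclideanSpace.single 0 2) = 0 := by
    apply zt_zero; simp
  have := h2 0 (EuclideanSpace.single 0 2)
  rw [h3, h4] at this
  norm_num at this

lemma sm_shift {f : R3 → ℝ} (hf : Sm f) (x : R3) (s : ℝ) : Sm (fun z => f (x - s • z)) :=
  hf.comp (contDiff_const.sub (contDiff_id.const_smul s))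

lemma pd_shift {f : R3 → ℝ} (hf : Sm f) (x : R3) (s : ℝ) (j : Fin 3) (z : R3) :
    pd (fun z => f (x - s • z)) j z = - s * pd f j (x - s • z) := by
  have h1 : HasFDerivAt (fun z : R3 => x - s • z) (-(s • ContinuousLinearMap.id ℝ R3)) z :=
    ((hasFDerivAt_id z).const_smul s).const_sub x
  have h2 := (hf.diff (x - s • z)).hasFDerivAt.comp z h1
  have h4 : fderiv ℝ (fun z => f (x - s • z)) z = _ := h2.fderiv
  unfold pd
  rw [h4]
  simp

/-- integration by parts in the kernel -/
lemma Kop_pd {k f : R3 → ℝ} (hk : Sm k) (hkc : HasCompactSupport k) (hf : Sm f) (s : ℝ) (j : Fin 3)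
    (x : R3) : s * Kop k s (pd f j) x = Kop (pd k j) s f x := by
  have := ibp (sm_shift hf x s) hk hkc j
  simp only [pd_shift hf] at this
  unfold Kop
  rw [← integral_const_mul]
  have e1 : ∫ z, pd k j z * f (x - s • z) = ∫ z, f (x - s • z) * pd k j z := by
    congr 1; ext z; ring
  rw [e1, this, ← integral_neg]
  congr 1; ext z; ring

lemma lap_sm {f : R3 → ℝ} (hf : Sm f) : Sm (lap f) := by
  unfold lap
  exact ContDiff.sum fun j _ => (hf.pd j).pd j

lemma lap_tsupport (f : R3 → ℝ) {r : ℝ} (h : tsupport f ⊆ CB r) : tsupport (lap f) ⊆ CB r := by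
  apply tsupp_of
  intro z hz
  unfold lap
  apply Finset.sum_eq_zero
  intro j _
  by_contra h0
  exact hz (h (pd_tsupport _ _ (pd_tsupport _ _ (subset_tsupport _ h0))))

lemma Kop_deriv {f : R3 → ℝ} (hf : Sm f) (hc : HasCompactSupport f) (x : R3) (t : ℝ) :
    HasDerivAt (fun t => Kop et t f x) (t * Kop zt t (lap f) x) t := by
  have hdc : Continuous (fderiv ℝ f) := hf.continuous_fderiv (by simp)
  obtain ⟨C, hC⟩ := (hc.fderiv ℝ).exists_bound_of_continuous hdc
  have hder : ∀ (z : R3) (τ : ℝ), HasDerivAt (fun τ => et z * f (x - τ • z))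
      (et z * fderiv ℝ f (x - τ • z) (-z)) τ := by
    intro z τ
    have h1 : HasDerivAt (fun τ : ℝ => x - τ • z) (-z) τ := by
      have := ((hasDerivAt_id τ).smul_const z).const_sub x
      simpa using this
    exact ((hf.diff _).hasFDerivAt.comp_hasDerivAt τ h1).const_mul _
  have key := hasDerivAt_integral_of_dominated_loc_of_deriv_le (μ := volume)
    (F := fun τ z => et z * f (x - τ • z))
    (F' := fun τ z => et z * fderiv ℝ f (x - τ • z) (-z)) (x₀ := t) (s := Set.univ)
    (bound := fun z => et z * (C * ‖z‖)) Filter.univ_mem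
    (Filter.Eventually.of_forall fun τ =>
      (et_sm.cont.mul (sm_shift hf x τ).cont).aestronglyMeasurable)
    ((et_sm.cont.mul (sm_shift hf x t).cont).integrable_of_hasCompactSupport et_cs.mul_right)
    (by
      apply Continuous.aestronglyMeasurable
      exact et_sm.cont.mul ((hdc.comp (by fun_prop)).clm_apply (by fun_prop)))
    (Filter.Eventually.of_forall fun z τ _ => by
      rw [norm_mul, Real.norm_of_nonneg (et_nonneg z)]
      refine mul_le_mul_of_nonneg_left ?_ (et_nonneg z)
      refine (ContinuousLinearMap.le_opNorm _ _).trans ?_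
      rw [norm_neg]
      exact mul_le_mul_of_nonneg_right (hC _) (norm_nonneg _))
    ((et_sm.cont.mul (by fun_prop)).integrable_of_hasCompactSupport et_cs.mul_right)
    (Filter.Eventually.of_forall fun z τ _ => hder z τ)
  have h2 := key.2
  have e : ∫ z, et z * fderiv ℝ f (x - t • z) (-z) = t * Kop zt t (lap f) x := by
    have e1 : ∀ z, et z * fderiv ℝ f (x - t • z) (-z)
        = ∑ j, pd zt j z * pd f j (x - t • z) := by
      intro z
      have hv : -z = ∑ j, (-(z j)) • EuclideanSpace.single j (1:ℝ) := by
        ext i; simp [Fin.sum_univ_three]; fin_cases i <;> simp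
      rw [hv, map_sum]
      simp only [zt_pd, map_smul, smul_eq_mul, Finset.mul_sum]
      unfold pd
      apply Finset.sum_congr rfl
      intro j _; ring
    simp only [e1]
    rw [integral_finsetSum]
    · have e2 : ∀ j, ∫ z, pd zt j z * pd f j (x - t • z) = t * Kop zt t (pd (pd f j) j) x := by
        intro j
        rw [Kop_pd zt_sm zt_cs (hf.pd j)]; rfl
      simp only [e2, ← Finset.mul_sum]
      congr 1
      unfold Kop lap
      simp only [Finset.mul_sum]
      rw [integral_finsetSum]
      intro j _
      exact (zt_sm.cont.mul (sm_shift ((hf.pd j).pd j) x t).cont).integrable_of_hasCompactSupport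
        zt_cs.mul_right
    · intro j _
      exact ((zt_sm.pd j).cont.mul (sm_shift (hf.pd j) x t).cont).integrable_of_hasCompactSupport
        (pd_cs zt_cs j).mul_right
  rw [e] at h2
  exact h2

lemma Kop_zt_cont {g : R3 → ℝ} (hg : Continuous g) (x : R3) :
    Continuous (fun t => Kop zt t g x) := by
  unfold Kop
  have := continuous_parametric_integral_of_continuous (μ := (volume : Measure R3))
    (f := fun (t : ℝ) (z : R3) => zt z * g (x - t • z)) (s := CB 1)
    (by
      apply Continuous.mul
      · exact zt_sm.cont.comp continuous_snd
      · exact hg.comp (by fun_prop)) (isCompact_closedBall _ _)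
  convert this using 2 with t
  exact int_eq_setInt (fun z hz => by simp [zt_zero hz])

lemma Kop_ftc {f : R3 → ℝ} (hf : Sm f) (hc : HasCompactSupport f) (x : R3) (s : ℝ) :
    ∫ t in (0:ℝ)..s, t * Kop zt t (lap f) x = Kop et s f x - c0 * f x := by
  rw [intervalIntegral.integral_eq_sub_of_hasDerivAt (f := fun t => Kop et t f x)
    (fun t _ => Kop_deriv hf hc x t)]
  · congr 1
    simp [Kop, c0, integral_mul_const]
  · apply Continuous.intervalIntegrable
    exact continuous_id.mul (Kop_zt_cont (lap_sm hf).cont x)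

/-- measure for the mollifier -/
def mY (s : ℝ) : Measure R3 :=
  Measure.map (fun z : R3 => s • z) (volume.withDensity fun z => ENNReal.ofReal (et z))

def mT (s : ℝ) : Measure ℝ := (volume.restrict (Set.Ioc 0 s)).withDensity fun t => ENNReal.ofReal t
def mZ : Measure R3 := volume.withDensity fun z => ENNReal.ofReal (zt z)
def mW (s : ℝ) : Measure R3 := Measure.map (fun q : ℝ × R3 => q.1 • q.2) ((mT s).prod mZ)

instance : IsFiniteMeasure mZ := isFiniteMeasure_withDensity_ofReal zt_int.2
instance (s : ℝ) : IsFiniteMeasure (mT s) := by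
  apply isFiniteMeasure_withDensity_ofReal
  exact ((continuous_id (X := ℝ)).integrableOn_Ioc).2
instance (s : ℝ) : IsFiniteMeasure (mW s) := by
  unfold mW; infer_instance
instance (s : ℝ) : IsFiniteMeasure (mY s) := by
  have : IsFiniteMeasure ((volume : Measure R3).withDensity fun z => ENNReal.ofReal (et z)) :=
    isFiniteMeasure_withDensity_ofReal et_int.2
  unfold mY; infer_instance

lemma cvm_mY (s : ℝ) {f : R3 → ℝ} (hf : Continuous f) (x : R3) : cvm (mY s) f x = Kop et s f x := by
  unfold cvm mY Kop
  rw [integral_map (by fun_prop) (by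
    apply Continuous.aestronglyMeasurable; fun_prop)]
  rw [integral_withDensity_eq_integral_toReal_smul
    (by exact (et_sm.cont.measurable).ennreal_ofReal) (by simp)]
  congr 1; ext z
  rw [ENNReal.toReal_ofReal (et_nonneg z), smul_eq_mul]

lemma cvm_mW {s : ℝ} (hs : 0 ≤ s) {f : R3 → ℝ} (hf : Continuous f) (hc : HasCompactSupport f) (x : R3) :
    cvm (mW s) f x = ∫ t in (0:ℝ)..s, t * Kop zt t f x := by
  obtain ⟨C, hC⟩ := hc.exists_bound_of_continuous hf
  unfold cvm mW
  have hcont : Continuous (fun q : ℝ × R3 => f (x - q.1 • q.2)) := hf.comp (by fun_prop)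
  rw [integral_map (by fun_prop) (by
    apply Continuous.aestronglyMeasurable; fun_prop)]
  rw [integral_prod]
  · rw [intervalIntegral.integral_of_le hs]
    unfold mT
    rw [integral_withDensity_eq_integral_toReal_smul (by fun_prop) (by simp)]
    apply setIntegral_congr_fun measurableSet_Ioc
    intro t ht
    simp only [ENNReal.toReal_ofReal ht.1.le, smul_eq_mul]
    congr 1
    unfold Kop mZ
    rw [integral_withDensity_eq_integral_toReal_smul
      (by exact (zt_sm.cont.measurable).ennreal_ofReal) (by simp)]
    congr 1; ext z
    rw [ENNReal.toReal_ofReal (zt_nonneg z), smul_eq_mul]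
  · exact Integrable.of_bound hcont.aestronglyMeasurable C
      (Filter.Eventually.of_forall fun q => hC _)

lemma mY_supp {s : ℝ} (hs : 0 ≤ s) : mY s (CB s)ᶜ = 0 := by
  unfold mY
  rw [Measure.map_apply (by fun_prop) (isClosed_closedBall.measurableSet.compl),
    withDensity_apply _ (by
      exact (by fun_prop : Measurable fun z : R3 => s • z) (isClosed_closedBall.measurableSet.compl))]
  rw [setLIntegral_eq_zero_iff (by
      exact (by fun_prop : Measurable fun z : R3 => s • z) (isClosed_closedBall.measurableSet.compl))
      (by exact (et_sm.cont.measurable).ennreal_ofReal)]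
  refine Filter.Eventually.of_forall fun z hz => ?_
  rw [et_zero]; · simp
  intro h
  apply hz
  simp only [mem_closedBall, dist_zero_right] at h ⊢
  rw [norm_smul, Real.norm_of_nonneg hs]
  nlinarith

lemma mW_supp {s : ℝ} : mW s (CB s)ᶜ = 0 := by
  unfold mW
  have hT : ∀ᵐ t ∂(mT s), t ∈ Set.Ioc 0 s := by
    apply (withDensity_absolutelyContinuous _ _).ae_le
    exact ae_restrict_mem measurableSet_Ioc
  have hZ : ∀ᵐ z ∂mZ, z ∈ CB 1 := by
    unfold mZ
    rw [ae_withDensity_iff (by exact (zt_sm.cont.measurable).ennreal_ofReal)]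
    refine Filter.Eventually.of_forall fun z hz => ?_
    by_contra h
    exact hz (by simp [zt_zero h])
  have h : ∀ᵐ q ∂((mT s).prod mZ), q.1 • q.2 ∈ CB s := by
    have h1 : ∀ᵐ q ∂((mT s).prod mZ), q.1 ∈ Set.Ioc 0 s :=
      Measure.quasiMeasurePreserving_fst.ae hT
    have h2 : ∀ᵐ q ∂((mT s).prod mZ), q.2 ∈ CB 1 :=
      Measure.quasiMeasurePreserving_snd.ae hZ
    filter_upwards [h1, h2] with q a b
    simp only [mem_closedBall, dist_zero_right] at b ⊢
    rw [norm_smul, Real.norm_of_nonneg a.1.le]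
    nlinarith [a.1, a.2, norm_nonneg q.2]
  rw [Measure.map_apply (by fun_prop) (isClosed_closedBall.measurableSet.compl)]
  rw [ae_iff] at h
  exact h

lemma Kop_L2 {k f : R3 → ℝ} (hk : Continuous k) (hkc : HasCompactSupport k) (hf : Continuous f)
    (hfc : HasCompactSupport f) (s : ℝ) :
    ∫ x, (Kop k s f x) ^ 2 ≤ (∫ z, |k z|) ^ 2 * ∫ x, f x ^ 2 := by
  have hkI : Integrable (fun z => |k z|) := (hk.integrable_of_hasCompactSupport hkc).abs
  have hcabs : HasCompactSupport (fun z => |k z|) := hkc.comp_left (g := fun t : ℝ => |t|) (by simp)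
  have hpt : ∀ x, (Kop k s f x) ^ 2 ≤ (∫ z, |k z|) * ∫ z, |k z| * f (x - s • z) ^ 2 := by
    intro x
    have hc1 : Continuous (fun z => f (x - s • z)) := hf.comp (by fun_prop)
    have h1 := cs_gen (μ := (volume : Measure R3)) (f := fun z => Real.sqrt |k z|)
      (g := fun z => Real.sqrt |k z| * |f (x - s • z)|)
      (by simpa [Real.sq_sqrt] using hkI)
      (by
        simp only [mul_pow, Real.sq_sqrt (abs_nonneg _), sq_abs]
        exact (hk.abs.mul (hc1.pow 2)).integrable_of_hasCompactSupport hcabs.mul_right)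
      (by
        simp only [← mul_assoc, Real.mul_self_sqrt (abs_nonneg _)]
        exact (hk.abs.mul hc1.abs).integrable_of_hasCompactSupport hcabs.mul_right)
    simp only [mul_pow, Real.sq_sqrt (abs_nonneg _), sq_abs, ← mul_assoc,
      Real.mul_self_sqrt (abs_nonneg _)] at h1
    refine le_trans ?_ h1
    rw [← sq_abs]
    refine pow_le_pow_left₀ (abs_nonneg _) ?_ 2
    unfold Kop
    refine (abs_integral_le_integral_abs).trans (le_of_eq ?_)
    congr 1; ext z; rw [abs_mul]
  have hprod : Integrable (fun q : R3 × R3 => |k q.2| * f (q.1 - s • q.2) ^ 2)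
      ((volume : Measure R3).prod volume) := by
    obtain ⟨r1, hr1⟩ := hkc.isCompact.isBounded.subset_closedBall (0 : R3)
    obtain ⟨r2, hr2⟩ := hfc.isCompact.isBounded.subset_closedBall (0 : R3)
    apply Continuous.integrable_of_hasCompactSupport
    · exact (hk.abs.comp continuous_snd).mul ((hf.comp (by fun_prop)).pow 2)
    · apply HasCompactSupport.intro
        ((isCompact_closedBall (0 : R3) (r2 + |s| * r1)).prod (isCompact_closedBall (0 : R3) r1))
      intro q hq
      by_contra h0
      apply hq
      have ha : k q.2 ≠ 0 := by intro h; apply h0; simp [h]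
      have hb : f (q.1 - s • q.2) ≠ 0 := by intro h; apply h0; simp [h]
      have h1 := hr1 (subset_tsupport _ ha)
      have h2 := hr2 (subset_tsupport _ hb)
      refine ⟨?_, h1⟩
      simp only [mem_closedBall, dist_zero_right] at h1 h2 ⊢
      calc ‖q.1‖ = ‖(q.1 - s • q.2) + s • q.2‖ := by simp
        _ ≤ ‖q.1 - s • q.2‖ + ‖s • q.2‖ := norm_add_le _ _
        _ ≤ r2 + |s| * r1 := by
          rw [norm_smul, Real.norm_eq_abs]
          exact add_le_add h2 (mul_le_mul_of_nonneg_left h1 (abs_nonneg _))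
  have hI : Integrable (fun x => ∫ z, |k z| * f (x - s • z) ^ 2) := hprod.integral_prod_left
  have hsw : ∫ x, ∫ z, |k z| * f (x - s • z) ^ 2 = (∫ z, |k z|) * ∫ x, f x ^ 2 := by
    rw [integral_integral_swap hprod]
    have : ∀ z, ∫ x, |k z| * f (x - s • z) ^ 2 = |k z| * ∫ x, f x ^ 2 := by
      intro z
      rw [integral_const_mul, integral_sub_right_eq_self (fun x => f x ^ 2) (s • z)]
    simp only [this]
    rw [integral_mul_const]
  calc ∫ x, (Kop k s f x) ^ 2 ≤ ∫ x, (∫ z, |k z|) * ∫ z, |k z| * f (x - s • z) ^ 2 := by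
        apply integral_mono_of_nonneg (Filter.Eventually.of_forall fun x => sq_nonneg _)
          (hI.const_mul _) (Filter.Eventually.of_forall hpt)
    _ = _ := by rw [integral_const_mul, hsw]; ring

def nrm (f : R3 → ℝ) : ℝ := Real.sqrt (∫ x, f x ^ 2)
def nB (r : ℝ) (f : R3 → ℝ) : ℝ := Real.sqrt (∫ x in CB r, f x ^ 2)

lemma nrm_nonneg (f : R3 → ℝ) : 0 ≤ nrm f := Real.sqrt_nonneg _
lemma nB_nonneg (r : ℝ) (f : R3 → ℝ) : 0 ≤ nB r f := Real.sqrt_nonneg _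

lemma cs_ball {a b : R3 → ℝ} (ha : Continuous a) (hb : Continuous b) {r : ℝ}
    (h : tsupport b ⊆ CB r) : |∫ x, a x * b x| ≤ nB r a * nrm b := by
  have hz : ∀ x, x ∉ CB r → b x = 0 := fun x hx => by
    by_contra h0; exact hx (h (subset_tsupport _ h0))
  rw [int_eq_setInt (r := r) (fun x hx => by simp [hz x hx])]
  unfold nB nrm
  rw [int_eq_setInt (f := fun x => b x ^ 2) (r := r) (fun x hx => by simp [hz x hx]),
    ← Real.sqrt_mul (integral_nonneg fun x => sq_nonneg _)]
  apply Real.abs_le_sqrt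
  exact cs_gen (intOn (ha.pow 2) r) (intOn (hb.pow 2) r) (intOn (ha.mul hb) r)

lemma Kop_nrm {k f : R3 → ℝ} (hk : Continuous k) (hkc : HasCompactSupport k) (hf : Continuous f)
    (hfc : HasCompactSupport f) (s : ℝ) : nrm (Kop k s f) ≤ (∫ z, |k z|) * nrm f := by
  have h0 : (0:ℝ) ≤ ∫ z, |k z| := integral_nonneg fun z => abs_nonneg (k z)
  have h1 := Kop_L2 hk hkc hf hfc s
  have h2 : nrm f ^ 2 = ∫ x, f x ^ 2 := Real.sq_sqrt (integral_nonneg fun x => sq_nonneg _)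
  conv_lhs => unfold nrm
  apply Real.sqrt_le_iff.mpr
  refine ⟨mul_nonneg h0 (nrm_nonneg _), ?_⟩
  rw [mul_pow, h2]
  exact h1

lemma nrm_cmul (c : ℝ) (hc : 0 ≤ c) (f : R3 → ℝ) : nrm (fun x => c * f x) = c * nrm f := by
  unfold nrm
  simp only [mul_pow]
  rw [integral_const_mul, Real.sqrt_mul (sq_nonneg _), Real.sqrt_sq hc]

lemma sq_int {f : R3 → ℝ} (hf : Continuous f) (hc : HasCompactSupport f) :
    Integrable (fun x => f x ^ 2) := by
  have h : HasCompactSupport (fun x => f x * f x) := hc.mul_left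
  simp only [sq]
  exact (hf.mul hf).integrable_of_hasCompactSupport h

lemma hess_lap {W : R3 → ℝ} (hW : Sm W) (hc : HasCompactSupport W) (i j : Fin 3) :
    nrm (pd (pd W i) j) ≤ nrm (lap W) := by
  unfold nrm
  apply Real.sqrt_le_sqrt
  have e1 : ∀ a b : Fin 3, ∫ x, pd (pd W a) a x * pd (pd W b) b x = ∫ x, pd (pd W a) b x ^ 2 := by
    intro a b
    rw [ibp ((hW.pd a).pd a) (hW.pd b) (pd_cs hc b)]
    have h2 := ibp ((hW.pd a).pd b) (hW.pd b) (pd_cs hc b) a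
    have h3 : ∀ x, pd (pd (pd W a) b) a x = pd (pd (pd W a) a) b x := fun x =>
      pd_comm (hW.pd a) b a x
    simp only [h3] at h2
    rw [← h2]
    congr 1; ext x
    rw [pd_comm hW b a]; ring
  have e2 : ∫ x, lap W x ^ 2 = ∑ a, ∑ b, ∫ x, pd (pd W a) b x ^ 2 := by
    simp only [← e1]
    have hI : ∀ a b, Integrable fun x => pd (pd W a) a x * pd (pd W b) b x := fun a b =>
      (((hW.pd a).pd a).cont.mul ((hW.pd b).pd b).cont).integrable_of_hasCompactSupport
        (pd_cs (pd_cs hc a) a).mul_right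
    have : ∀ a, ∑ b, ∫ x, pd (pd W a) a x * pd (pd W b) b x =
        ∫ x, ∑ b, pd (pd W a) a x * pd (pd W b) b x := fun a =>
      (integral_finsetSum _ fun b _ => hI a b).symm
    simp only [this]
    rw [← integral_finsetSum _ fun a _ => integrable_finsetSum _ fun b _ => hI a b]
    congr 1; ext x
    unfold lap
    rw [sq, Finset.sum_mul_sum]
  rw [e2]
  have hn : ∀ a b, 0 ≤ ∫ x, pd (pd W a) b x ^ 2 := fun a b => integral_nonneg fun x => sq_nonneg _
  calc ∫ x, pd (pd W i) j x ^ 2 ≤ ∑ b, ∫ x, pd (pd W i) b x ^ 2 :=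
        Finset.single_le_sum (f := fun b => ∫ x, pd (pd W i) b x ^ 2) (fun b _ => hn i b)
          (Finset.mem_univ j)
    _ ≤ _ := Finset.single_le_sum (f := fun a => ∑ b, ∫ x, pd (pd W a) b x ^ 2)
        (fun a _ => Finset.sum_nonneg fun b _ => hn a b) (Finset.mem_univ i)

lemma nrm_sub_le {f g : R3 → ℝ} (hf : Continuous f) (hfc : HasCompactSupport f) (hg : Continuous g)
    (hgc : HasCompactSupport g) : nrm (fun x => f x - g x) ≤ nrm f + nrm g := by
  have h1 := cs_gen (sq_int hf hfc) (sq_int hg hgc)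
    ((hf.mul hg).integrable_of_hasCompactSupport hfc.mul_right)
  have hf2 := sq_int hf hfc
  have hg2 := sq_int hg hgc
  have hfg : Integrable (fun x => f x * g x) :=
    (hf.mul hg).integrable_of_hasCompactSupport hfc.mul_right
  have A : 0 ≤ ∫ x, f x ^ 2 := integral_nonneg fun x => sq_nonneg _
  have B : 0 ≤ ∫ x, g x ^ 2 := integral_nonneg fun x => sq_nonneg _
  have e : ∫ x, (f x - g x) ^ 2 = (∫ x, f x ^ 2) - 2 * (∫ x, f x * g x) + ∫ x, g x ^ 2 := by
    have h2 : Integrable (fun x => 2 * (f x * g x)) := hfg.const_mul 2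
    have h3 : Integrable (fun x => f x ^ 2 - 2 * (f x * g x)) := hf2.sub h2
    rw [← integral_const_mul, ← integral_sub hf2 h2, ← integral_add h3 hg2]
    congr 1; ext x; ring
  have h4 : |∫ x, f x * g x| ≤ nrm f * nrm g := by
    unfold nrm
    rw [← Real.sqrt_mul A]
    exact Real.abs_le_sqrt h1
  have hF : nrm f ^ 2 = ∫ x, f x ^ 2 := Real.sq_sqrt A
  have hG : nrm g ^ 2 = ∫ x, g x ^ 2 := Real.sq_sqrt B
  conv_lhs => unfold nrm
  apply Real.sqrt_le_iff.mpr
  refine ⟨add_nonneg (nrm_nonneg _) (nrm_nonneg _), ?_⟩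
  rw [e, ← hF, ← hG]
  have := (abs_le.mp h4).1
  nlinarith

def k1 : ℝ := ∑ j, ∫ z, |pd et j z|
def k2 : ℝ := ∑ j, ∫ z, |pd (pd et j) j z|

lemma k1_ge (j : Fin 3) : ∫ z, |pd et j z| ≤ k1 :=
  Finset.single_le_sum (f := fun j => ∫ z, |pd et j z|)
    (fun _ _ => integral_nonneg fun _ => abs_nonneg _) (Finset.mem_univ j)
lemma k2_ge (j : Fin 3) : ∫ z, |pd (pd et j) j z| ≤ k2 :=
  Finset.single_le_sum (f := fun j => ∫ z, |pd (pd et j) j z|)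
    (fun _ _ => integral_nonneg fun _ => abs_nonneg _) (Finset.mem_univ j)
lemma k1_nonneg : 0 ≤ k1 := Finset.sum_nonneg fun _ _ => integral_nonneg fun _ => abs_nonneg _
lemma k2_nonneg : 0 ≤ k2 := Finset.sum_nonneg fun _ _ => integral_nonneg fun _ => abs_nonneg _

lemma Y_pd_nrm {X : R3 → ℝ} (hX : Sm X) (hc : HasCompactSupport X) {s : ℝ} (hs : 0 < s) (j : Fin 3) :
    nrm (pd (cvm (mY s) X) j) ≤ s⁻¹ * k1 * nrm X := by
  have e : pd (cvm (mY s) X) j = fun x => s⁻¹ * Kop (pd et j) s X x := by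
    ext x
    rw [cvm_pd _ hX hc, cvm_mY s (hX.pd j).cont, ← Kop_pd et_sm et_cs hX]
    field_simp
  rw [e, nrm_cmul _ (by positivity), mul_assoc]
  refine mul_le_mul_of_nonneg_left ?_ (by positivity)
  refine (Kop_nrm (et_sm.pd j).cont (pd_cs et_cs j) hX.cont hc s).trans ?_
  exact mul_le_mul_of_nonneg_right (k1_ge j) (nrm_nonneg _)

lemma Y_pd2_nrm {X : R3 → ℝ} (hX : Sm X) (hc : HasCompactSupport X) {s : ℝ} (hs : 0 < s) (j : Fin 3) :
    nrm (pd (pd (cvm (mY s) X) j) j) ≤ (s⁻¹)^2 * k2 * nrm X := by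
  have e : pd (pd (cvm (mY s) X) j) j = fun x => (s⁻¹)^2 * Kop (pd (pd et j) j) s X x := by
    ext x
    rw [cvm_pd _ hX hc, cvm_pd _ (hX.pd j) (pd_cs hc j), cvm_mY s ((hX.pd j).pd j).cont,
      ← Kop_pd (et_sm.pd j) (pd_cs et_cs j) hX, ← Kop_pd et_sm et_cs (hX.pd j)]
    field_simp
  rw [e, nrm_cmul _ (by positivity), mul_assoc]
  refine mul_le_mul_of_nonneg_left ?_ (by positivity)
  refine (Kop_nrm ((et_sm.pd j).pd j).cont (pd_cs (pd_cs et_cs j) j) hX.cont hc s).trans ?_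
  exact mul_le_mul_of_nonneg_right (k2_ge j) (nrm_nonneg _)

lemma cvm_lap (m : Measure R3) [IsFiniteMeasure m] {f : R3 → ℝ} (hf : Sm f)
    (hc : HasCompactSupport f) : lap (cvm m f) = cvm m (lap f) := by
  ext x
  unfold lap
  simp only [cvm_pd m hf hc, cvm_pd m (hf.pd _) (pd_cs hc _)]
  unfold cvm
  rw [integral_finsetSum]
  intro j _
  obtain ⟨C, hC⟩ := (pd_cs (pd_cs hc j) j).exists_bound_of_continuous ((hf.pd j).pd j).cont
  exact Integrable.of_bound (((hf.pd j).pd j).cont.comp (by fun_prop)).aestronglyMeasurable C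
        (Filter.Eventually.of_forall fun q => hC _)

lemma W_lap {f : R3 → ℝ} (hf : Sm f) {r : ℝ} (h : tsupport f ⊆ CB r) {s : ℝ} (hs : 0 < s) (x : R3) :
    lap (cvm (mW s) f) x = cvm (mY s) f x - c0 * f x := by
  rw [cvm_lap _ hf (csb h), cvm_mW hs.le (lap_sm hf).cont (csb (lap_tsupport f h)),
    Kop_ftc hf (csb h), cvm_mY s hf.cont]

lemma W_lap_nrm {f : R3 → ℝ} (hf : Sm f) {r : ℝ} (h : tsupport f ⊆ CB r) {s : ℝ} (hs : 0 < s) :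
    nrm (lap (cvm (mW s) f)) ≤ 2 * c0 * nrm f := by
  have e : lap (cvm (mW s) f) = fun x => cvm (mY s) f x - (fun x => c0 * f x) x := by
    ext x; exact W_lap hf h hs x
  rw [e]
  refine (nrm_sub_le (cvm_sm _ hf (csb h)).cont (csb (cvm_supp (mY_supp hs.le) h))
    (g := fun x => c0 * f x) (continuous_const.mul hf.cont) (csb h).mul_left).trans ?_
  rw [nrm_cmul _ c0_pos.le]
  have e2 : cvm (mY s) f = Kop et s f := by ext x; exact cvm_mY s hf.cont x
  have := Kop_nrm et_sm.cont et_cs hf.cont (csb h) s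
  rw [e2]
  have e3 : ∫ z, |et z| = c0 := by
    unfold c0; congr 1; ext z; exact abs_of_nonneg (et_nonneg z)
  rw [e3] at this
  linarith

lemma div_lap_zero {u : Fin 3 → R3 → ℝ} (hu : ∀ i, Sm (u i)) (hdiv : ∀ x, ∑ i, pd (u i) i x = 0)
    (x : R3) : ∑ i, pd (lap (u i)) i x = 0 := by
  have h1 : ∀ i, pd (lap (u i)) i x = ∑ j, pd (pd (pd (u i) i) j) j x := by
    intro i
    unfold lap
    rw [pd_sum (fun j => ((hu i).pd j).pd j)]
    apply Finset.sum_congr rfl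
    intro j _
    rw [pd_comm ((hu i).pd j)]
    have hh : pd (pd (u i) j) i = pd (pd (u i) i) j := by ext y; exact pd_comm (hu i) j i y
    rw [hh]
  simp only [h1]
  rw [Finset.sum_comm]
  apply Finset.sum_eq_zero
  intro j _
  have h0 : (fun y => ∑ i, pd (u i) i y) = fun _ => 0 := by ext y; exact hdiv y
  have h2 : ∀ y, ∑ i, pd (pd (u i) i) j y = 0 := by
    intro y
    rw [← pd_sum (fun i => (hu i).pd i), h0]; simp [pd]
  have h3 : (fun y => ∑ i, pd (pd (u i) i) j y) = fun _ => 0 := by ext y; exact h2 y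
  rw [← pd_sum (fun i => ((hu i).pd i).pd j), h3]; simp [pd]

lemma int_cs {a b : R3 → ℝ} (ha : Continuous a) (hb : Continuous b) (hc : HasCompactSupport b) :
    Integrable (fun x => a x * b x) :=
  (ha.mul hb).integrable_of_hasCompactSupport hc.mul_left

/-- testing the pressure with a divergence -/
lemma press_test {P : R3 → ℝ} {u : Fin 3 → R3 → ℝ} {F : Fin 3 → Fin 3 → R3 → ℝ}
    (hP : Sm P) (hu : ∀ i, Sm (u i)) (hF : ∀ i j, Sm (F i j))
    (heq : ∀ i x, pd P i x = lap (u i) x - ∑ j, pd (F i j) j x)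
    {Z : Fin 3 → R3 → ℝ} (hZ : ∀ i, Sm (Z i)) (hc : ∀ i, HasCompactSupport (Z i)) :
    ∫ x, P x * ∑ i, pd (Z i) i x =
      - (∑ i, ∫ x, lap (u i) x * Z i x) - ∑ i, ∑ j, ∫ x, F i j x * pd (Z i) j x := by
  simp only [Finset.mul_sum]
  rw [integral_finsetSum _ fun i _ => int_cs hP.cont ((hZ i).pd i).cont (pd_cs (hc i) i)]
  rw [← Finset.sum_neg_distrib, ← Finset.sum_sub_distrib]
  apply Finset.sum_congr rfl
  intro i _
  rw [ibp hP (hZ i) (hc i)]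
  have e : ∀ j, ∫ x, F i j x * pd (Z i) j x = - ∫ x, pd (F i j) j x * Z i x := fun j =>
    ibp (hF i j) (hZ i) (hc i) j
  simp only [e, heq, sub_mul, Finset.sum_mul]
  have i1 : ∀ j, Integrable (fun x => pd (F i j) j x * Z i x) := fun j =>
    int_cs ((hF i j).pd j).cont (hZ i).cont (hc i)
  rw [integral_sub (int_cs (lap_sm (hu i)).cont (hZ i).cont (hc i))
    (integrable_finsetSum _ fun j _ => i1 j), integral_finsetSum _ fun j _ => i1 j]
  rw [Finset.sum_neg_distrib]
  ring

lemma abs_sum3 {f : Fin 3 → ℝ} {c : ℝ} (h : ∀ i, |f i| ≤ c) : |∑ i, f i| ≤ 3 * c := by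
  refine (Finset.abs_sum_le_sum_abs _ _).trans ?_
  refine (Finset.sum_le_sum fun i _ => h i).trans ?_
  simp

def Cp : ℝ := c0⁻¹ * (18 * c0 + 9 * k1 + 9 * k2)

lemma Cp_nonneg : 0 ≤ Cp := by
  have := c0_pos; have := k1_nonneg; have := k2_nonneg
  unfold Cp; positivity

lemma press {P : R3 → ℝ} {u : Fin 3 → R3 → ℝ} {F : Fin 3 → Fin 3 → R3 → ℝ}
    (hP : Sm P) (hu : ∀ i, Sm (u i)) (hF : ∀ i j, Sm (F i j))
    (heq : ∀ i x, pd P i x = lap (u i) x - ∑ j, pd (F i j) j x)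
    (hdiv : ∀ x, ∑ i, pd (u i) i x = 0) {r s : ℝ} (hs : 0 < s)
    {X : Fin 3 → R3 → ℝ} (hX : ∀ i, Sm (X i)) (hXs : ∀ i, tsupport (X i) ⊆ CB r)
    {MF Mu MX Mf : ℝ} (hMF : ∀ i j, nB (r + s) (F i j) ≤ MF) (hMu : ∀ i, nB (r + s) (u i) ≤ Mu)
    (hMX : ∀ i, nrm (X i) ≤ MX) (hMf : nrm (fun x => ∑ i, pd (X i) i x) ≤ Mf) :
    |∫ x, P x * ∑ i, pd (X i) i x| ≤ Cp * (MF * (Mf + s⁻¹ * MX) + Mu * ((s⁻¹)^2 * MX)) := by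
  have hc0 := c0_pos
  have hk1 := k1_nonneg
  have hk2 := k2_nonneg
  have hsi : 0 < s⁻¹ := inv_pos.mpr hs
  have pMF : 0 ≤ MF := (nB_nonneg _ _).trans (hMF 0 0)
  have pMu : 0 ≤ Mu := (nB_nonneg _ _).trans (hMu 0)
  have pMX : 0 ≤ MX := (nrm_nonneg _).trans (hMX 0)
  have pMf : 0 ≤ Mf := (nrm_nonneg _).trans hMf
  set f : R3 → ℝ := fun x => ∑ i, pd (X i) i x with hf_def
  have hf : Sm f := ContDiff.sum fun i _ => (hX i).pd i
  have hfs : tsupport f ⊆ CB r := by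
    apply tsupp_of
    intro z hz
    apply Finset.sum_eq_zero
    intro i _
    by_contra h0
    exact hz (hXs i (pd_tsupport _ _ (subset_tsupport _ h0)))
  set W := cvm (mW s) f with hW_def
  have hW : Sm W := cvm_sm _ hf (csb hfs)
  have hWs : tsupport W ⊆ CB (r + s) := cvm_supp mW_supp hfs
  have hWc := csb hWs
  set Y : Fin 3 → R3 → ℝ := fun i => cvm (mY s) (X i) with hY_def
  have hY : ∀ i, Sm (Y i) := fun i => cvm_sm _ (hX i) (csb (hXs i))
  have hYs : ∀ i, tsupport (Y i) ⊆ CB (r + s) := fun i => cvm_supp (mY_supp hs.le) (hXs i)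
  have hYc := fun i => csb (hYs i)
  have hYd : ∀ x, cvm (mY s) f x = ∑ i, pd (Y i) i x := by
    intro x
    simp only [hY_def, cvm_pd _ (hX _) (csb (hXs _))]
    unfold cvm
    rw [integral_finsetSum]
    intro j _
    obtain ⟨C, hC⟩ := (pd_cs (csb (hXs j)) j).exists_bound_of_continuous ((hX j).pd j).cont
    exact Integrable.of_bound (((hX j).pd j).cont.comp (by fun_prop)).aestronglyMeasurable C
        (Filter.Eventually.of_forall fun q => hC _)
  have hsplit : c0 * ∫ x, P x * f x = (∫ x, P x * ∑ i, pd (Y i) i x) -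
      ∫ x, P x * ∑ i, pd (pd W i) i x := by
    have hYf : Sm (fun x => ∑ i, pd (Y i) i x) := ContDiff.sum fun i _ => (hY i).pd i
    have hYfc : HasCompactSupport (fun x => ∑ i, pd (Y i) i x) := by
      have : (fun x => ∑ i, pd (Y i) i x) = cvm (mY s) f := by ext x; exact (hYd x).symm
      rw [this]
      exact csb (cvm_supp (mY_supp hs.le) hfs)
    have hLc : HasCompactSupport (fun x => ∑ i, pd (pd W i) i x) := csb (lap_tsupport W hWs)
    have hL : Sm (fun x => ∑ i, pd (pd W i) i x) := lap_sm hW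
    rw [← integral_const_mul, ← integral_sub (int_cs hP.cont hYf.cont hYfc)
      (int_cs hP.cont hL.cont hLc)]
    congr 1; ext x
    have := W_lap hf hfs hs x
    rw [hYd x] at this
    have h2 : ∑ i, pd (pd W i) i x = lap W x := rfl
    rw [h2, this]; ring
  -- the W part
  have hT1 : |∫ x, P x * ∑ i, pd (pd W i) i x| ≤ 18 * c0 * (MF * Mf) := by
    rw [press_test hP hu hF heq (Z := fun i => pd W i) (fun i => hW.pd i) (fun i => pd_cs hWc i)]
    have hz : ∑ i, ∫ x, lap (u i) x * pd W i x = 0 := by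
      have : ∀ i, ∫ x, lap (u i) x * pd W i x = - ∫ x, pd (lap (u i)) i x * W x := fun i =>
        ibp (lap_sm (hu i)) hW hWc i
      simp only [this]
      rw [Finset.sum_neg_distrib, ← integral_finsetSum _ fun i _ =>
        int_cs ((lap_sm (hu i)).pd i).cont hW.cont hWc]
      simp only [← Finset.sum_mul, div_lap_zero hu hdiv]
      simp
    rw [hz, neg_zero, zero_sub, abs_neg]
    have hb : ∀ i j, |∫ x, F i j x * pd (pd W i) j x| ≤ MF * (2 * c0 * Mf) := by
      intro i j
      refine (cs_ball (hF i j).cont ((hW.pd i).pd j).cont (r := r + s)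
        ((pd_tsupport _ _).trans ((pd_tsupport _ _).trans hWs))).trans ?_
      refine mul_le_mul (hMF i j) ?_ (nrm_nonneg _) pMF
      refine (hess_lap hW hWc i j).trans ((W_lap_nrm hf hfs hs).trans ?_)
      exact mul_le_mul_of_nonneg_left hMf (by positivity)
    refine (abs_sum3 fun i => abs_sum3 fun j => hb i j).trans (le_of_eq ?_)
    ring
  have hT2 : |∫ x, P x * ∑ i, pd (Y i) i x| ≤ 9 * k2 * (Mu * ((s⁻¹)^2 * MX)) +
      9 * k1 * (MF * (s⁻¹ * MX)) := by
    rw [press_test hP hu hF heq hY hYc]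
    have h1 : |∑ i, ∫ x, lap (u i) x * Y i x| ≤ 3 * (3 * (Mu * ((s⁻¹)^2 * k2 * MX))) := by
      apply abs_sum3
      intro i
      have e : ∫ x, lap (u i) x * Y i x = ∑ j, ∫ x, u i x * pd (pd (Y i) j) j x := by
        unfold lap
        simp only [Finset.sum_mul]
        rw [integral_finsetSum _ fun j _ => int_cs (((hu i).pd j).pd j).cont (hY i).cont (hYc i)]
        apply Finset.sum_congr rfl
        intro j _
        have a1 := ibp ((hu i).pd j) (hY i) (hYc i) j
        have a2 := ibp (hu i) ((hY i).pd j) (pd_cs (hYc i) j) j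
        rw [a2, a1, neg_neg]
      rw [e]
      apply abs_sum3
      intro j
      refine (cs_ball (hu i).cont (((hY i).pd j).pd j).cont (r := r + s)
        ((pd_tsupport _ _).trans ((pd_tsupport _ _).trans (hYs i)))).trans ?_
      refine mul_le_mul (hMu i) ?_ (nrm_nonneg _) pMu
      refine (Y_pd2_nrm (hX i) (csb (hXs i)) hs j).trans ?_
      exact mul_le_mul_of_nonneg_left (hMX i) (by positivity)
    have h2 : |∑ i, ∑ j, ∫ x, F i j x * pd (Y i) j x| ≤ 3 * (3 * (MF * (s⁻¹ * k1 * MX))) := by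
      apply abs_sum3
      intro i
      apply abs_sum3
      intro j
      refine (cs_ball (hF i j).cont ((hY i).pd j).cont (r := r + s)
        ((pd_tsupport _ _).trans (hYs i))).trans ?_
      refine mul_le_mul (hMF i j) ?_ (nrm_nonneg _) pMF
      refine (Y_pd_nrm (hX i) (csb (hXs i)) hs j).trans ?_
      exact mul_le_mul_of_nonneg_left (hMX i) (by positivity)
    refine (abs_sub _ _).trans ?_
    rw [abs_neg]
    refine (add_le_add h1 h2).trans (le_of_eq ?_)
    ring
  have hfin : c0 * |∫ x, P x * f x| ≤ (18 * c0 + 9 * k1 + 9 * k2) *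
      (MF * (Mf + s⁻¹ * MX) + Mu * ((s⁻¹)^2 * MX)) := by
    rw [← abs_of_pos hc0, ← abs_mul, abs_of_pos hc0, hsplit]
    refine (abs_sub _ _).trans ((add_le_add hT2 hT1).trans ?_)
    have q1 : 0 ≤ MF * Mf := by positivity
    have q2 : 0 ≤ MF * (s⁻¹ * MX) := by positivity
    have q3 : 0 ≤ Mu * ((s⁻¹)^2 * MX) := by positivity
    have z1 := mul_nonneg hc0.le q2
    have z2 := mul_nonneg hc0.le q3
    have z3 := mul_nonneg hk1 q1
    have z4 := mul_nonneg hk1 q3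
    have z5 := mul_nonneg hk2 q1
    have z6 := mul_nonneg hk2 q2
    nlinarith
  unfold Cp
  rw [mul_assoc, ← div_eq_inv_mul, le_div_iff₀ hc0]
  linarith

lemma dst_bdd : ∃ M : ℝ, 0 < M ∧ ∀ t, |deriv Real.smoothTransition t| ≤ M := by
  obtain ⟨M, hM⟩ := (isCompact_Icc (a := (0:ℝ)) (b := 1)).exists_bound_of_continuousOn
    dst_sm.continuous.continuousOn
  refine ⟨max M 1, by positivity, fun t => ?_⟩
  by_cases ht : t ∈ Set.Icc (0:ℝ) 1
  · exact (hM t ht).trans (le_max_left _ _)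
  · have h0 : deriv Real.smoothTransition t = 0 := by
      rw [Set.mem_Icc, not_and_or, not_le, not_le] at ht
      rcases ht with h | h
      · have : Real.smoothTransition =ᶠ[nhds t] fun _ => 0 := by
          filter_upwards [Iio_mem_nhds h] with y hy
          exact Real.smoothTransition.zero_of_nonpos hy.le
        simp [this.deriv_eq]
      · have : Real.smoothTransition =ᶠ[nhds t] fun _ => 1 := by
          filter_upwards [Ioi_mem_nhds h] with y hy
          exact Real.smoothTransition.one_of_one_le hy.le
        simp [this.deriv_eq]
    rw [h0, abs_zero]; positivity

lemma cutoff : ∃ C : ℝ, 0 < C ∧ ∀ ρ s : ℝ, 0 ≤ ρ → 0 < s → ∃ χ : R3 → ℝ, Sm χ ∧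
    tsupport χ ⊆ CB (ρ + s) ∧ (∀ x, 0 ≤ χ x) ∧ (∀ x, χ x ≤ 1) ∧ (∀ x ∈ CB ρ, χ x = 1) ∧
    ∀ j x, |pd χ j x| ≤ C * s⁻¹ := by
  obtain ⟨M, hM0, hM⟩ := dst_bdd
  refine ⟨2 * M, by positivity, fun ρ s hρ hs => ?_⟩
  have ha : 0 < s * (2 * ρ + s) := by positivity
  set a := s * (2 * ρ + s) with hadef
  let g : R3 → ℝ := fun x => 1 - a⁻¹ * (‖x‖ ^ 2 - ρ ^ 2)
  have hg : Sm g := contDiff_const.sub (contDiff_const.mul ((contDiff_norm_sq ℝ).sub contDiff_const))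
  have hts : tsupport (fun x => Real.smoothTransition (g x)) ⊆ CB (ρ + s) := by
    apply tsupp_of
    intro z hz
    apply Real.smoothTransition.zero_of_nonpos
    simp only [mem_closedBall, dist_zero_right, not_le] at hz
    have : 1 ≤ a⁻¹ * (‖z‖ ^ 2 - ρ ^ 2) := by
      rw [← div_eq_inv_mul, le_div_iff₀ ha]; nlinarith
    simp only [g]; linarith
  refine ⟨fun x => Real.smoothTransition (g x), st_sm.comp hg, hts,
    fun x => Real.smoothTransition.nonneg _, fun x => Real.smoothTransition.le_one _, ?_, ?_⟩
  · intro x hx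
    apply Real.smoothTransition.one_of_one_le
    simp only [mem_closedBall, dist_zero_right] at hx
    have : a⁻¹ * (‖x‖ ^ 2 - ρ ^ 2) ≤ 0 := by
      apply mul_nonpos_of_nonneg_of_nonpos (by positivity)
      have := norm_nonneg x
      nlinarith
    simp only [g]; linarith
  · intro j x
    by_cases hx : x ∈ CB (ρ + s)
    · have h1 : HasFDerivAt g (-(a⁻¹ • (2 • innerSL ℝ x))) x :=
        (((nsq_fderiv x).sub_const _).const_mul a⁻¹).const_sub 1
      have h2 : HasDerivAt Real.smoothTransition (deriv Real.smoothTransition (g x)) (g x) :=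
        (st_sm.differentiable (by simp) _).hasDerivAt
      have h3 := h2.comp_hasFDerivAt x h1
      have h4 : fderiv ℝ (fun x => Real.smoothTransition (g x)) x = _ := h3.fderiv
      have h5 : pd (fun x => Real.smoothTransition (g x)) j x =
          - (deriv Real.smoothTransition (g x) * (a⁻¹ * (2 * x j))) := by
        unfold pd
        rw [h4]
        simp [inner_single']
      simp only [mem_closedBall, dist_zero_right] at hx
      have hxj : |x j| ≤ 2 * ρ + s := (PiLp.norm_apply_le x j).trans (by linarith)
      have h6 : a⁻¹ * (2 * |x j|) ≤ 2 * s⁻¹ := by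
        rw [← div_eq_inv_mul, div_le_iff₀ ha, hadef]
        have : 2 * s⁻¹ * (s * (2 * ρ + s)) = 2 * (2 * ρ + s) := by field_simp
        rw [this]; linarith
      rw [h5, abs_neg, abs_mul, abs_mul, abs_mul, abs_of_pos (inv_pos.mpr ha), abs_two]
      calc _ ≤ M * (2 * s⁻¹) := mul_le_mul (hM _) h6 (by positivity) hM0.le
        _ = _ := by ring
    · have : pd (fun x => Real.smoothTransition (g x)) j x = 0 := by
        by_contra h
        exact hx (hts (pd_tsupport _ j (subset_closure h)))
      rw [this, abs_zero]; positivity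

structure Sol (u v : Fin 3 → R3 → ℝ) (P θ : R3 → ℝ) : Prop where
  su : ∀ i, Sm (u i)
  sv : ∀ i, Sm (v i)
  sP : Sm P
  sθ : Sm θ
  e1 : ∀ i x, -lap (u i) x + (∑ j, u j x * pd (u i) j x)
      + pd P i x + (∑ j, pd (fun y => v j y * v i y) j x) = 0
  e2 : ∀ i x, -lap (v i) x + (∑ j, u j x * pd (v i) j x)
      + pd θ i x + (∑ j, v j x * pd (u i) j x) = 0
  e3 : ∀ x, -lap θ x + (∑ j, u j x * pd θ j x) + (∑ j, pd (v j) j x) = 0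
  e4 : ∀ x, (∑ j, pd (u j) j x) = 0

def U2 (u : Fin 3 → R3 → ℝ) (x : R3) : ℝ := ∑ i, u i x ^ 2
def NN (u v : Fin 3 → R3 → ℝ) (θ : R3 → ℝ) (x : R3) : ℝ := U2 u x + (U2 v x + θ x ^ 2)
def Dj (u v : Fin 3 → R3 → ℝ) (θ : R3 → ℝ) (j : Fin 3) (x : R3) : ℝ :=
  ∑ i, pd (u i) j x ^ 2 + (∑ i, pd (v i) j x ^ 2 + pd θ j x ^ 2)
def DD (u v : Fin 3 → R3 → ℝ) (θ : R3 → ℝ) (x : R3) : ℝ := ∑ j, Dj u v θ j x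
def ED (u v : Fin 3 → R3 → ℝ) (θ : R3 → ℝ) (j : Fin 3) (x : R3) : ℝ :=
  ∑ i, u i x * pd (u i) j x + (∑ i, v i x * pd (v i) j x + θ x * pd θ j x)
def SS (u v : Fin 3 → R3 → ℝ) (x : R3) : ℝ := ∑ i, u i x * v i x
/-- flux without pressure -/
def J0 (u v : Fin 3 → R3 → ℝ) (θ : R3 → ℝ) (j : Fin 3) (x : R3) : ℝ :=
  u j x * (1 / 2 * NN u v θ x) + (v j x * SS u v x + θ x * v j x)

lemma sm_sum {f : Fin 3 → R3 → ℝ} (hf : ∀ i, Sm (f i)) : Sm (fun x => ∑ i, f i x) :=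
  ContDiff.sum fun i _ => hf i

section
variable {u v : Fin 3 → R3 → ℝ} {P θ : R3 → ℝ}

lemma U2_sm (h : ∀ i, Sm (u i)) : Sm (U2 u) := sm_sum fun i => (h i).pow 2
lemma NN_sm (S : Sol u v P θ) : Sm (NN u v θ) := (U2_sm S.su).add ((U2_sm S.sv).add (S.sθ.pow 2))
lemma SS_sm (S : Sol u v P θ) : Sm (SS u v) := sm_sum fun i => (S.su i).mul (S.sv i)
lemma ED_sm (S : Sol u v P θ) (j : Fin 3) : Sm (ED u v θ j) :=
  (sm_sum fun i => (S.su i).mul ((S.su i).pd j)).add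
    ((sm_sum fun i => (S.sv i).mul ((S.sv i).pd j)).add (S.sθ.mul (S.sθ.pd j)))
lemma Dj_sm (S : Sol u v P θ) (j : Fin 3) : Sm (Dj u v θ j) :=
  (sm_sum fun i => ((S.su i).pd j).pow 2).add
    ((sm_sum fun i => ((S.sv i).pd j).pow 2).add ((S.sθ.pd j).pow 2))
lemma DD_sm (S : Sol u v P θ) : Sm (DD u v θ) := sm_sum fun j => Dj_sm S j
lemma J0_sm (S : Sol u v P θ) (j : Fin 3) : Sm (J0 u v θ j) :=
  ((S.su j).mul (contDiff_const.mul (NN_sm S))).add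
    (((S.sv j).mul (SS_sm S)).add (S.sθ.mul (S.sv j)))

lemma U2_nonneg (u : Fin 3 → R3 → ℝ) (x : R3) : 0 ≤ U2 u x := Finset.sum_nonneg fun _ _ => sq_nonneg _
lemma NN_nonneg (x : R3) : 0 ≤ NN u v θ x := by
  have := U2_nonneg u x; have := U2_nonneg v x; unfold NN; positivity
lemma Dj_nonneg (j : Fin 3) (x : R3) : 0 ≤ Dj u v θ j x := by
  unfold Dj; positivity
lemma DD_nonneg (x : R3) : 0 ≤ DD u v θ x := Finset.sum_nonneg fun _ _ => Dj_nonneg _ _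

lemma pd_sq {f : R3 → ℝ} (hf : Sm f) (j : Fin 3) (x : R3) :
    pd (fun y => f y ^ 2) j x = 2 * (f x * pd f j x) := by
  simp only [pow_two]
  rw [pd_mul hf hf]; ring

lemma pd_U2 (h : ∀ i, Sm (u i)) (j : Fin 3) (x : R3) :
    pd (U2 u) j x = 2 * ∑ i, u i x * pd (u i) j x := by
  unfold U2
  rw [pd_sum (fun i => (h i).pow 2), Finset.mul_sum]
  exact Finset.sum_congr rfl fun i _ => pd_sq (h i) j x

lemma pd_NN (S : Sol u v P θ) (j : Fin 3) (x : R3) : pd (NN u v θ) j x = 2 * ED u v θ j x := by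
  unfold NN ED
  rw [pd_add (U2_sm S.su) ((U2_sm S.sv).add (S.sθ.pow 2)), pd_add (U2_sm S.sv) (S.sθ.pow 2),
    pd_U2 S.su, pd_U2 S.sv, pd_sq S.sθ]
  ring

lemma pd_SS (S : Sol u v P θ) (j : Fin 3) (x : R3) :
    pd (SS u v) j x = ∑ i, (u i x * pd (v i) j x + pd (u i) j x * v i x) := by
  unfold SS
  rw [pd_sum (fun i => (S.su i).mul (S.sv i))]
  exact Finset.sum_congr rfl fun i _ => pd_mul (S.su i) (S.sv i) j x

lemma pd_dot {w : Fin 3 → R3 → ℝ} (h : ∀ i, Sm (w i)) (j : Fin 3) (x : R3) :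
    pd (fun y => ∑ i, w i y * pd (w i) j y) j x =
      ∑ i, (w i x * pd (pd (w i) j) j x + pd (w i) j x ^ 2) := by
  rw [pd_sum (fun i => (h i).mul ((h i).pd j))]
  refine Finset.sum_congr rfl fun i _ => ?_
  rw [pd_mul (h i) ((h i).pd j)]; ring

lemma pd_ED (S : Sol u v P θ) (j : Fin 3) (x : R3) : pd (ED u v θ j) j x =
    Dj u v θ j x + (∑ i, u i x * pd (pd (u i) j) j x + (∑ i, v i x * pd (pd (v i) j) j x
      + θ x * pd (pd θ j) j x)) := by
  have h1 := sm_sum fun i => (S.su i).mul ((S.su i).pd j)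
  have h2 := sm_sum fun i => (S.sv i).mul ((S.sv i).pd j)
  have h3 := S.sθ.mul (S.sθ.pd j)
  unfold ED Dj
  rw [pd_add h1 (h2.add h3), pd_add h2 h3, pd_dot S.su, pd_dot S.sv, pd_mul S.sθ (S.sθ.pd j)]
  simp only [Finset.sum_add_distrib]
  ring

lemma pd_J0 (S : Sol u v P θ) (j : Fin 3) (x : R3) : pd (J0 u v θ j) j x =
    (u j x * ED u v θ j x + pd (u j) j x * (1 / 2 * NN u v θ x)) +
    ((v j x * (∑ i, (u i x * pd (v i) j x + pd (u i) j x * v i x)) + pd (v j) j x * SS u v x) +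
      (θ x * pd (v j) j x + pd θ j x * v j x)) := by
  have h1 := (S.su j).mul (contDiff_const.mul (NN_sm S) : Sm fun x => 1/2 * NN u v θ x)
  have h2 := (S.sv j).mul (SS_sm S)
  have h3 := S.sθ.mul (S.sv j)
  unfold J0
  rw [pd_add h1 (h2.add h3), pd_add h2 h3, pd_mul (S.su j) (contDiff_const.mul (NN_sm S)),
    pd_mul (S.sv j) (SS_sm S), pd_mul S.sθ (S.sv j), pd_cmul (NN_sm S), pd_NN S, pd_SS S]
  ring

lemma energy (S : Sol u v P θ) (x : R3) :
    DD u v θ x = ∑ j, pd (fun y => (ED u v θ j y - J0 u v θ j y) - u j y * P y) j x := by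
  have h : ∀ j, pd (fun y => (ED u v θ j y - J0 u v θ j y) - u j y * P y) j x =
      (pd (ED u v θ j) j x - pd (J0 u v θ j) j x) - (u j x * pd P j x + pd (u j) j x * P x) := by
    intro j
    rw [pd_sub ((ED_sm S j).sub (J0_sm S j)) ((S.su j).mul S.sP), pd_sub (ED_sm S j) (J0_sm S j),
      pd_mul (S.su j) S.sP]
  simp only [h, pd_ED S, pd_J0 S]
  have e1 : ∀ i, -lap (u i) x + (∑ j, u j x * pd (u i) j x)
      + pd P i x + ∑ j, (v j x * pd (v i) j x + pd (v j) j x * v i x) = 0 := fun i => by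
    rw [← S.e1 i x]
    congr 1
    exact Finset.sum_congr rfl fun j _ => (pd_mul (S.sv j) (S.sv i) j x).symm
  have e2 := fun i => S.e2 i x
  have e3 := S.e3 x
  have e4 := S.e4 x
  have a0 := e1 0
  have a1 := e1 1
  have a2 := e1 2
  have b0 := e2 0
  have b1 := e2 1
  have b2 := e2 2
  clear h e1 e2
  simp only [lap, DD, Dj, ED, NN, U2, SS, Fin.sum_univ_three] at *
  linear_combination u 0 x * a0 + u 1 x * a1 + u 2 x * a2 + v 0 x * b0 + v 1 x * b1 + v 2 x * b2
    + θ x * e3 + (P x + 1/2 * (u 0 x ^ 2 + u 1 x ^ 2 + u 2 x ^ 2 + (v 0 x ^ 2 + v 1 x ^ 2 + v 2 x ^ 2 + θ x ^ 2))) * e4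

end

lemma setInt_mono_r {f : R3 → ℝ} (hf : Continuous f) (h0 : ∀ x, 0 ≤ f x) {r r' : ℝ} (h : r ≤ r') :
    ∫ x in CB r, f x ≤ ∫ x in CB r', f x :=
  setIntegral_mono_set (intOn hf r') (Eventually.of_forall h0)
    (Eventually.of_forall (closedBall_subset_closedBall h))

lemma setInt_le {f g : R3 → ℝ} (hf : Continuous f) (hg : Continuous g) (r : ℝ) (h : ∀ x, f x ≤ g x) :
    ∫ x in CB r, f x ≤ ∫ x in CB r, g x :=
  integral_mono (intOn hf r) (intOn hg r) h

lemma nB_le {f g : R3 → ℝ} (hf : Continuous f) (hg : Continuous g) {r r' : ℝ} (h : r ≤ r')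
    (hfg : ∀ x, f x ^ 2 ≤ g x) : nB r f ≤ √(∫ x in CB r', g x) := by
  apply Real.sqrt_le_sqrt
  refine (setInt_le (hf.pow 2) hg r hfg).trans (setInt_mono_r hg (fun x => (sq_nonneg _).trans (hfg x)) h)

lemma nrm_le {f g : R3 → ℝ} (hf : Continuous f) (hg : Continuous g) {r r' : ℝ} (h : r ≤ r')
    (hs : tsupport f ⊆ CB r) (hfg : ∀ x, f x ^ 2 ≤ g x) : nrm f ≤ √(∫ x in CB r', g x) := by
  have : nrm f = nB r f := by
    unfold nrm nB
    rw [int_eq_setInt (r := r)]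
    intro x hx
    rw [image_eq_zero_of_notMem_tsupport (fun h => hx (hs h))]; simp
  rw [this]; exact nB_le hf hg h hfg

lemma cs_on {a b : R3 → ℝ} (ha : Continuous a) (hb : Continuous b) (r : ℝ) :
    ∫ x in CB r, a x * b x ≤ nB r a * nB r b := by
  unfold nB
  rw [← Real.sqrt_mul (integral_nonneg fun x => sq_nonneg _)]
  apply Real.le_sqrt_of_sq_le
  exact cs_gen (intOn (ha.pow 2) r) (intOn (hb.pow 2) r) (intOn (ha.mul hb) r)

section
variable {u v : Fin 3 → R3 → ℝ} {P θ : R3 → ℝ}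

lemma ui_sq_le (u : Fin 3 → R3 → ℝ) (i : Fin 3) (x : R3) : u i x ^ 2 ≤ U2 u x :=
  Finset.single_le_sum (f := fun i => u i x ^ 2) (fun _ _ => sq_nonneg _) (Finset.mem_univ i)

lemma J0_bd (j : Fin 3) (x : R3) : |J0 u v θ j x| ≤ 2 * ((∑ i, |u i x|) * NN u v θ x)
    + (U2 v x + θ x ^ 2) := by
  have hN := NN_nonneg (u := u) (v := v) (θ := θ) x
  have hV : U2 v x + θ x ^ 2 ≤ NN u v θ x := by unfold NN; linarith [U2_nonneg u x]
  have hV0 := U2_nonneg v x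
  have huj : |u j x| ≤ ∑ i, |u i x| :=
    Finset.single_le_sum (f := fun i => |u i x|) (fun _ _ => abs_nonneg _) (Finset.mem_univ j)
  have h1 : |u j x * (1 / 2 * NN u v θ x)| ≤ (∑ i, |u i x|) * NN u v θ x := by
    rw [abs_mul, abs_of_nonneg (by positivity : 0 ≤ 1 / 2 * NN u v θ x)]
    have := mul_le_mul_of_nonneg_right huj hN
    have := mul_nonneg (abs_nonneg (u j x)) hN
    linarith
  have hvv : ∀ i, |v i x| * |v j x| ≤ NN u v θ x := by
    intro i
    have a := ui_sq_le v i x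
    have b := ui_sq_le v j x
    have c := sq_nonneg (|v i x| - |v j x|)
    have := sq_nonneg (θ x)
    nlinarith [sq_abs (v i x), sq_abs (v j x)]
  have h2 : |v j x * SS u v x| ≤ (∑ i, |u i x|) * NN u v θ x := by
    unfold SS
    rw [Finset.mul_sum, Finset.sum_mul]
    refine (Finset.abs_sum_le_sum_abs _ _).trans (Finset.sum_le_sum fun i _ => ?_)
    rw [abs_mul, abs_mul]
    have := mul_le_mul_of_nonneg_left (hvv i) (abs_nonneg (u i x))
    linarith
  have h3 : |θ x * v j x| ≤ U2 v x + θ x ^ 2 := by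
    have b := ui_sq_le v j x
    rw [abs_mul]
    nlinarith [sq_abs (θ x), sq_abs (v j x), sq_nonneg (|θ x| - |v j x|)]
  unfold J0
  refine (abs_add_le _ _).trans ?_
  have := abs_add_le (v j x * SS u v x) (θ x * v j x)
  linarith

lemma ED_bd (a b : ℝ) (j : Fin 3) (x : R3) : -(ED u v θ j x * (2 * (a * b))) ≤
    1 / 2 * (a ^ 2 * Dj u v θ j x) + 2 * b ^ 2 * NN u v θ x := by
  unfold ED Dj NN U2
  simp only [Fin.sum_univ_three]
  nlinarith [sq_nonneg (a * pd (u 0) j x + 2 * b * u 0 x), sq_nonneg (a * pd (u 1) j x + 2 * b * u 1 x),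
    sq_nonneg (a * pd (u 2) j x + 2 * b * u 2 x), sq_nonneg (a * pd (v 0) j x + 2 * b * v 0 x),
    sq_nonneg (a * pd (v 1) j x + 2 * b * v 1 x), sq_nonneg (a * pd (v 2) j x + 2 * b * v 2 x),
    sq_nonneg (a * pd θ j x + 2 * b * θ x)]

lemma test_id (S : Sol u v P θ) {φ : R3 → ℝ} (hφ : Sm φ) (hc : HasCompactSupport φ) :
    ∫ x, φ x * DD u v θ x = (∫ x, ∑ j, (J0 u v θ j x - ED u v θ j x) * pd φ j x) +
      ∫ x, P x * ∑ j, pd (fun y => φ y * u j y) j x := by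
  have hG : ∀ j, Sm (fun y => (ED u v θ j y - J0 u v θ j y) - u j y * P y) := fun j =>
    ((ED_sm S j).sub (J0_sm S j)).sub ((S.su j).mul S.sP)
  have I : ∀ {f g : R3 → ℝ}, Continuous f → Continuous g → HasCompactSupport g →
      Integrable (fun x => f x * g x) := fun hf hg h =>
    (hf.mul hg).integrable_of_hasCompactSupport h.mul_left
  have h1 : ∫ x, φ x * DD u v θ x = ∑ j, -∫ x, ((ED u v θ j x - J0 u v θ j x) - u j x * P x) * pd φ j x := by
    have : ∀ j, -∫ x, ((ED u v θ j x - J0 u v θ j x) - u j x * P x) * pd φ j x =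
        ∫ x, pd (fun y => (ED u v θ j y - J0 u v θ j y) - u j y * P y) j x * φ x := by
      intro j
      rw [ibp (hG j) hφ hc j, neg_neg]
    simp only [this]
    rw [← integral_finsetSum _ (fun j _ => I ((hG j).pd j).cont hφ.cont hc)]
    congr 1; ext x
    rw [energy S, Finset.mul_sum]
    exact Finset.sum_congr rfl fun j _ => mul_comm _ _
  have hX : ∀ x, ∑ j, pd (fun y => φ y * u j y) j x = ∑ j, u j x * pd φ j x := by
    intro x
    have h4 := S.e4 x
    rw [← add_zero (∑ j, u j x * pd φ j x), ← mul_zero (φ x), ← h4, Finset.mul_sum,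
      ← Finset.sum_add_distrib]
    refine Finset.sum_congr rfl fun j _ => ?_
    rw [pd_mul hφ (S.su j)]; ring
  have i1 : ∀ j, Integrable (fun x => (J0 u v θ j x - ED u v θ j x) * pd φ j x) := fun j =>
    I ((J0_sm S j).cont.sub (ED_sm S j).cont) (hφ.pd j).cont (pd_cs hc j)
  have i2 : ∀ j, Integrable (fun x => (P x * u j x) * pd φ j x) := fun j =>
    I (S.sP.cont.mul (S.su j).cont) (hφ.pd j).cont (pd_cs hc j)
  rw [h1, integral_finsetSum _ (fun j _ => i1 j)]
  have h5 : ∫ x, P x * ∑ j, pd (fun y => φ y * u j y) j x = ∑ j, ∫ x, (P x * u j x) * pd φ j x := by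
    rw [← integral_finsetSum _ (fun j _ => i2 j)]
    congr 1; ext x
    rw [hX, Finset.mul_sum]
    exact Finset.sum_congr rfl fun j _ => by ring
  rw [h5, ← Finset.sum_add_distrib]
  refine Finset.sum_congr rfl fun j _ => ?_
  rw [← integral_add (i1 j) (i2 j), ← integral_neg]
  congr 1; ext x; ring

lemma press_bd (S : Sol u v P θ) {φ : R3 → ℝ} (hφ : Sm φ) {r s K : ℝ} (hs : 0 < s) (hK : 0 ≤ K)
    (hsup : tsupport φ ⊆ CB r) (h0 : ∀ x, 0 ≤ φ x) (h1 : ∀ x, φ x ≤ 1)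
    (hd : ∀ j x, |pd φ j x| ≤ K * s⁻¹) :
    |∫ x, P x * ∑ j, pd (fun y => φ y * u j y) j x| ≤ Cp * ((2 * K + 2) *
      ((s⁻¹)^2 * (∫ x in CB (r + s), NN u v θ x) +
      s⁻¹ * (√(∫ x in CB (r + s), U2 u x) * √(∫ x in CB (r + s), NN u v θ x ^ 2)))) := by
  have hU := (U2_sm S.su).cont
  have hN := (NN_sm S).cont
  have hr : r ≤ r + s := by linarith
  set a := √(∫ x in CB (r + s), U2 u x) with ha
  set b := √(∫ x in CB (r + s), NN u v θ x ^ 2) with hb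
  have ts : ∀ i, tsupport (fun y => φ y * u i y) ⊆ CB r := fun i =>
    (closure_mono (Function.support_mul_subset_left _ _)).trans hsup
  have hX : ∀ x, ∑ j, pd (fun y => φ y * u j y) j x = ∑ j, u j x * pd φ j x := by
    intro x
    have h4 := S.e4 x
    rw [← add_zero (∑ j, u j x * pd φ j x), ← mul_zero (φ x), ← h4, Finset.mul_sum,
      ← Finset.sum_add_distrib]
    refine Finset.sum_congr rfl fun j _ => ?_
    rw [pd_mul hφ (S.su j)]; ring
  have sX : ∀ i, Sm (fun y => φ y * u i y) := fun i => hφ.mul (S.su i)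
  have key := press (P := P) (u := u) (F := fun i j x => u j x * u i x + v j x * v i x)
    (X := fun i y => φ y * u i y) (r := r) (s := s) (MF := b) (Mu := a) (MX := a) (Mf := 2 * K * s⁻¹ * a)
    S.sP S.su (fun i j => ((S.su j).mul (S.su i)).add ((S.sv j).mul (S.sv i))) ?_ S.e4 hs sX ts ?_ ?_ ?_ ?_
  · refine key.trans (mul_le_mul_of_nonneg_left ?_ Cp_nonneg)
    have haa : a * a ≤ ∫ x in CB (r + s), NN u v θ x := by
      rw [ha, Real.mul_self_sqrt (integral_nonneg fun x => U2_nonneg u x)]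
      apply setInt_le hU hN
      intro x; unfold NN; have := U2_nonneg v x; nlinarith [sq_nonneg (θ x)]
    have hsi : 0 < s⁻¹ := by positivity
    have a0 : 0 ≤ a := Real.sqrt_nonneg _
    have b0 : 0 ≤ b := Real.sqrt_nonneg _
    have e1 := mul_le_mul_of_nonneg_left haa (by positivity : 0 ≤ (s⁻¹)^2)
    have e2 : 0 ≤ (s⁻¹)^2 * (a * a) := by positivity
    have e3 : 0 ≤ s⁻¹ * (a * b) := by positivity
    have e4 : 0 ≤ K * ((s⁻¹)^2 * ∫ x in CB (r + s), NN u v θ x) := mul_nonneg hK (e2.trans e1)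
    nlinarith
  · intro i x
    have e := S.e1 i x
    have : ∑ j, pd (fun x => u j x * u i x + v j x * v i x) j x = (∑ j, u j x * pd (u i) j x)
       + ∑ j, pd (fun y => v j y * v i y) j x := by
      have h4 := S.e4 x
      have : ∀ j, pd (fun x => u j x * u i x + v j x * v i x) j x =
          (u j x * pd (u i) j x + pd (fun y => v j y * v i y) j x) + pd (u j) j x * u i x := by
        intro j
        rw [pd_add ((S.su j).mul (S.su i)) ((S.sv j).mul (S.sv i)), pd_mul (S.su j) (S.su i)]; ring
      simp only [this]
      rw [Finset.sum_add_distrib, Finset.sum_add_distrib, ← Finset.sum_mul, h4]; ring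
    rw [this]; linarith
  · intro i j
    refine nB_le ?_ (hN.pow 2) le_rfl ?_
    · exact ((S.su j).cont.mul (S.su i).cont).add ((S.sv j).cont.mul (S.sv i).cont)
    · intro x
      have a1 := ui_sq_le u j x
      have a2 := ui_sq_le u i x
      have b1 := ui_sq_le v j x
      have b2 := ui_sq_le v i x
      have hθ := sq_nonneg (θ x)
      apply sq_le_sq'
      · unfold NN; nlinarith [sq_nonneg (u j x + u i x), sq_nonneg (v j x + v i x)]
      · unfold NN; nlinarith [sq_nonneg (u j x - u i x), sq_nonneg (v j x - v i x)]
  · intro i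
    exact nB_le (S.su i).cont hU le_rfl (ui_sq_le u i)
  · intro i
    refine nrm_le (sX i).cont hU hr (ts i) fun x => ?_
    have := ui_sq_le u i x
    have h2 : φ x ^ 2 ≤ 1 := by have := h0 x; have := h1 x; nlinarith
    calc (φ x * u i x) ^ 2 = φ x ^ 2 * u i x ^ 2 := by ring
      _ ≤ 1 * u i x ^ 2 := mul_le_mul_of_nonneg_right h2 (sq_nonneg _)
      _ ≤ _ := by linarith
  · simp only [hX]
    have hc : Continuous (fun x => ∑ j, u j x * pd φ j x) :=
      continuous_finsetSum _ fun j _ => (S.su j).cont.mul (hφ.pd j).cont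
    have hpp : 0 ≤ 2 * K * s⁻¹ := by positivity
    have := nrm_le (f := fun x => ∑ j, u j x * pd φ j x) (g := fun x => (2 * K * s⁻¹) ^ 2 * U2 u x)
      hc (hU.const_smul ((2 * K * s⁻¹) ^ 2)) hr ?_ ?_
    · rw [integral_const_mul, Real.sqrt_mul (sq_nonneg _), Real.sqrt_sq hpp] at this
      exact this
    · apply tsupp_of
      intro x hx
      apply Finset.sum_eq_zero
      intro j _
      rw [image_eq_zero_of_notMem_tsupport (f := pd φ j) (fun h => hx (hsup (pd_tsupport _ _ h))), mul_zero]
    · intro x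
      have h3 := Finset.sum_mul_sq_le_sq_mul_sq Finset.univ (fun j => u j x) (fun j => pd φ j x)
      refine h3.trans ?_
      rw [mul_comm]
      apply mul_le_mul_of_nonneg_right _ (U2_nonneg u x)
      have h4 : ∀ j, pd φ j x ^ 2 ≤ (K * s⁻¹) ^ 2 := fun j => by
        rw [← sq_abs]; exact pow_le_pow_left₀ (abs_nonneg _) (hd j x) 2
      rw [Fin.sum_univ_three]
      nlinarith [h4 0, h4 1, h4 2, sq_nonneg (K * s⁻¹)]
end

lemma cacc : ∃ C : ℝ, 0 < C ∧ ∀ (u v : Fin 3 → R3 → ℝ) (P θ : R3 → ℝ), Sol u v P θ →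
    ∀ ρ s : ℝ, 0 ≤ ρ → 0 < s → ∫ x in CB ρ, DD u v θ x ≤ C * (
      (s⁻¹)^2 * (∫ x in CB (ρ + s + s), NN u v θ x) +
      s⁻¹ * (√(∫ x in CB (ρ + s + s), U2 u x) * √(∫ x in CB (ρ + s + s), NN u v θ x ^ 2)) +
      s⁻¹ * ∫ x in CB (ρ + s + s), (U2 v x + θ x ^ 2)) := by
  obtain ⟨C0, hC0, hcut⟩ := cutoff
  refine ⟨2 * (6 * C0 ^ 2 + 36 * C0 + 6 * C0 + Cp * (2 * (2 * C0) + 2)), ?_, ?_⟩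
  · have := Cp_nonneg; positivity
  intro u v P θ S ρ s hρ hs
  obtain ⟨χ, hχ, hsup, hn, h1, hone, hd⟩ := hcut ρ s hρ hs
  have hsi : 0 < s⁻¹ := by positivity
  have hφ : Sm (fun x => χ x ^ 2) := hχ.pow 2
  have hφsup : tsupport (fun x => χ x ^ 2) ⊆ CB (ρ + s) := by
    apply tsupp_of
    intro x hx
    rw [image_eq_zero_of_notMem_tsupport (fun h => hx (hsup h))]; simp
  have hφn : ∀ x, 0 ≤ χ x ^ 2 := fun x => sq_nonneg _
  have hφ1 : ∀ x, χ x ^ 2 ≤ 1 := fun x => by have := hn x; have := h1 x; nlinarith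
  have hφd : ∀ j x, |pd (fun x => χ x ^ 2) j x| ≤ 2 * C0 * s⁻¹ := by
    intro j x
    rw [pd_sq hχ, abs_mul, abs_mul, abs_two, abs_of_nonneg (hn x)]
    have := mul_le_mul (h1 x) (hd j x) (abs_nonneg _) zero_le_one
    linarith
  have hp := press_bd S hφ hs (by positivity : 0 ≤ 2 * C0) hφsup hφn hφ1 hφd
  have hid := test_id S hφ (csb hφsup)
  have hU := (U2_sm S.su).cont
  have hN := (NN_sm S).cont
  have hD := (DD_sm S).cont
  have hV : Continuous (fun x => U2 v x + θ x ^ 2) := (U2_sm S.sv).cont.add (S.sθ.cont.pow 2)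
  set B := CB (ρ + s) with hB
  -- pointwise bound
  have hA : Continuous (fun x => ∑ i, |u i x|) := continuous_finsetSum _ fun i _ => (S.su i).cont.abs
  have hpt : ∀ x, ∑ j, (J0 u v θ j x - ED u v θ j x) * pd (fun x => χ x ^ 2) j x ≤
      1 / 2 * (χ x ^ 2 * DD u v θ x) + (6 * C0 ^ 2 * (s⁻¹) ^ 2 * NN u v θ x +
        (12 * C0 * s⁻¹ * ((∑ i, |u i x|) * NN u v θ x) + 6 * C0 * s⁻¹ * (U2 v x + θ x ^ 2))) := by
    intro x
    have hNx := NN_nonneg (u := u) (v := v) (θ := θ) x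
    have hj : ∀ j, (J0 u v θ j x - ED u v θ j x) * pd (fun x => χ x ^ 2) j x ≤
       1 / 2 * (χ x ^ 2 * Dj u v θ j x) + (2 * (C0 * s⁻¹) ^ 2 * NN u v θ x +
        2 * C0 * s⁻¹ * (2 * ((∑ i, |u i x|) * NN u v θ x) + (U2 v x + θ x ^ 2))) := by
      intro j
      have e1 := ED_bd (u := u) (v := v) (θ := θ) (χ x) (pd χ j x) j x
      have e2 : J0 u v θ j x * pd (fun x => χ x ^ 2) j x ≤ 2 * C0 * s⁻¹ *
          (2 * ((∑ i, |u i x|) * NN u v θ x) + (U2 v x + θ x ^ 2)) := by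
        refine (le_abs_self _).trans ?_
        rw [abs_mul, mul_comm]
        exact mul_le_mul (hφd j x) (J0_bd j x) (abs_nonneg _) (by positivity)
      have e3 : pd χ j x ^ 2 ≤ (C0 * s⁻¹) ^ 2 := by
        rw [← sq_abs]; exact pow_le_pow_left₀ (abs_nonneg _) (hd j x) 2
      have e4 := mul_le_mul_of_nonneg_right e3 hNx
      rw [sub_mul, pd_sq hχ] at *
      linarith
    have := Finset.sum_le_sum (s := Finset.univ) fun j (_ : j ∈ Finset.univ) => hj j
    refine this.trans (le_of_eq ?_)
    rw [Finset.sum_add_distrib, ← Finset.mul_sum, ← Finset.mul_sum]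
    simp only [DD, Finset.sum_const, Finset.card_univ, Fintype.card_fin]
    simp only [nsmul_eq_mul]
    push_cast
    ring
  have z : ∀ x, x ∉ B → χ x ^ 2 = 0 := fun x hx =>
    image_eq_zero_of_notMem_tsupport (f := fun x => χ x ^ 2) (fun h => hx (hφsup h))
  have hL : ∫ x, χ x ^ 2 * DD u v θ x = ∫ x in B, χ x ^ 2 * DD u v θ x :=
    int_eq_setInt fun x hx => by rw [z x hx, zero_mul]
  have hM : ∫ x, ∑ j, (J0 u v θ j x - ED u v θ j x) * pd (fun x => χ x ^ 2) j x =
      ∫ x in B, ∑ j, (J0 u v θ j x - ED u v θ j x) * pd (fun x => χ x ^ 2) j x := by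
    refine int_eq_setInt fun x hx => Finset.sum_eq_zero fun j _ => ?_
    rw [image_eq_zero_of_notMem_tsupport (f := pd (fun x => χ x ^ 2) j)
      (fun h => hx (hφsup (pd_tsupport _ _ h))), mul_zero]
  have hM2 := setInt_le (f := fun x => ∑ j, (J0 u v θ j x - ED u v θ j x) * pd (fun x => χ x ^ 2) j x)
    (continuous_finsetSum _ fun j _ =>
    ((J0_sm S j).cont.sub (ED_sm S j).cont).mul (hφ.pd j).cont) (by fun_prop) (ρ + s) hpt
  have hsplit : ∫ x in B, (1 / 2 * (χ x ^ 2 * DD u v θ x) + (6 * C0 ^ 2 * (s⁻¹) ^ 2 * NN u v θ x +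
        (12 * C0 * s⁻¹ * ((∑ i, |u i x|) * NN u v θ x) + 6 * C0 * s⁻¹ * (U2 v x + θ x ^ 2)))) =
      1 / 2 * (∫ x in B, χ x ^ 2 * DD u v θ x) + (6 * C0 ^ 2 * (s⁻¹) ^ 2 * (∫ x in B, NN u v θ x) +
        (12 * C0 * s⁻¹ * (∫ x in B, (∑ i, |u i x|) * NN u v θ x) +
          6 * C0 * s⁻¹ * ∫ x in B, (U2 v x + θ x ^ 2))) := by
    have hχc := hχ.cont
    rw [integral_add (intOn (by fun_prop) _) (intOn (by fun_prop) _),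
      integral_add (intOn (by fun_prop) _) (intOn (by fun_prop) _),
      integral_add (intOn (by fun_prop) _) (intOn (by fun_prop) _), integral_const_mul, integral_const_mul,
      integral_const_mul, integral_const_mul]
  have hLD : ∫ x in CB ρ, DD u v θ x ≤ ∫ x in B, χ x ^ 2 * DD u v θ x := by
    have e : ∫ x in CB ρ, DD u v θ x = ∫ x in CB ρ, χ x ^ 2 * DD u v θ x :=
      setIntegral_congr_fun measurableSet_closedBall fun x hx => by simp [hone x hx]
    rw [e]
    exact setInt_mono_r (hφ.cont.mul hD) (fun x => mul_nonneg (hφn x) (DD_nonneg x)) (by linarith)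
  have hr : ρ + s ≤ ρ + s + s := by linarith
  have hNN : ∫ x in B, NN u v θ x ≤ ∫ x in CB (ρ + s + s), NN u v θ x :=
    setInt_mono_r hN (fun x => NN_nonneg x) hr
  have hVV : ∫ x in B, (U2 v x + θ x ^ 2) ≤ ∫ x in CB (ρ + s + s), (U2 v x + θ x ^ 2) :=
    setInt_mono_r hV (fun x => add_nonneg (U2_nonneg v x) (sq_nonneg _)) hr
  have hAN : ∫ x in B, (∑ i, |u i x|) * NN u v θ x ≤
      3 * (√(∫ x in CB (ρ + s + s), U2 u x) * √(∫ x in CB (ρ + s + s), NN u v θ x ^ 2)) := by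
    have e : ∫ x in B, (∑ i, |u i x|) * NN u v θ x = ∑ i, ∫ x in B, |u i x| * NN u v θ x := by
      rw [← integral_finsetSum (f := fun i x => |u i x| * NN u v θ x) _ fun i _ => intOn ((S.su i).cont.abs.mul hN) _]
      congr 1; ext x; rw [Finset.sum_mul]
    rw [e]
    have : ∀ i, ∫ x in B, |u i x| * NN u v θ x ≤
        √(∫ x in CB (ρ + s + s), U2 u x) * √(∫ x in CB (ρ + s + s), NN u v θ x ^ 2) := fun i => by
      refine (cs_on (S.su i).cont.abs hN _).trans ?_
      refine mul_le_mul (nB_le (S.su i).cont.abs hU hr fun x => ?_)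
        (nB_le hN (hN.pow 2) hr fun x => le_rfl) (nB_nonneg _ _) (Real.sqrt_nonneg _)
      rw [sq_abs]; exact ui_sq_le u i x
    rw [Fin.sum_univ_three]
    linarith [this 0, this 1, this 2]
  have hp' := le_of_abs_le hp
  rw [hL, hM] at hid
  have hM3 := hM2.trans_eq hsplit
  set a1 := ∫ x in CB (ρ + s + s), NN u v θ x
  set a2 := √(∫ x in CB (ρ + s + s), U2 u x) * √(∫ x in CB (ρ + s + s), NN u v θ x ^ 2)
  set a3 := ∫ x in CB (ρ + s + s), (U2 v x + θ x ^ 2)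
  have p1 : 0 ≤ a1 := integral_nonneg fun x => NN_nonneg x
  have p2 : 0 ≤ a2 := by positivity
  have p3 : 0 ≤ a3 := integral_nonneg fun x => add_nonneg (U2_nonneg v x) (sq_nonneg _)
  have q1 := mul_le_mul_of_nonneg_left hNN (by positivity : 0 ≤ 6 * C0 ^ 2 * (s⁻¹) ^ 2)
  have q2 := mul_le_mul_of_nonneg_left hAN (by positivity : 0 ≤ 12 * C0 * s⁻¹)
  have q3 := mul_le_mul_of_nonneg_left hVV (by positivity : 0 ≤ 6 * C0 * s⁻¹)
  have hCp := Cp_nonneg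
  have main : ∫ x in CB ρ, DD u v θ x ≤ 2 * (6 * C0 ^ 2 * (s⁻¹ ^ 2 * a1) + 36 * C0 * (s⁻¹ * a2)
     + 6 * C0 * (s⁻¹ * a3) + Cp * (2 * (2 * C0) + 2) * (s⁻¹ ^ 2 * a1 + s⁻¹ * a2)) := by
    nlinarith
  refine main.trans ?_
  set b1 := s⁻¹ ^ 2 * a1
  set b2 := s⁻¹ * a2
  set b3 := s⁻¹ * a3
  have r1 : 0 ≤ b1 := by positivity
  have r2 : 0 ≤ b2 := by positivity
  have r3 : 0 ≤ b3 := by positivity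
  set K := Cp * (2 * (2 * C0) + 2)
  have hK : 0 ≤ K := by positivity
  have t1 : 0 ≤ C0 ^ 2 * b2 := by positivity
  have t2 : 0 ≤ C0 ^ 2 * b3 := by positivity
  have t3 : 0 ≤ C0 * b1 := by positivity
  have t4 : 0 ≤ C0 * b2 := by positivity
  have t5 : 0 ≤ C0 * b3 := by positivity
  have t6 : 0 ≤ K * b3 := by positivity
  nlinarith

lemma norm_fderiv_sq (f : R3 → ℝ) (x : R3) : ‖fderiv ℝ f x‖ ^ 2 ≤ ∑ j, pd f j x ^ 2 := by
  have h0 : 0 ≤ ∑ j, pd f j x ^ 2 := Finset.sum_nonneg fun _ _ => sq_nonneg _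
  have : ‖fderiv ℝ f x‖ ≤ √(∑ j, pd f j x ^ 2) := by
    refine ContinuousLinearMap.opNorm_le_bound _ (Real.sqrt_nonneg _) fun y => ?_
    have hy : y = ∑ j, y j • EuclideanSpace.single j (1:ℝ) := by
      ext i
      fin_cases i <;> simp [Fin.sum_univ_three]
    have h1 : fderiv ℝ f x y = ∑ j, pd f j x * y j := by
      conv_lhs => rw [hy]
      rw [map_sum]
      exact Finset.sum_congr rfl fun j _ => by rw [map_smul, smul_eq_mul, mul_comm]; rfl
    rw [h1, EuclideanSpace.norm_eq, ← Real.sqrt_mul h0]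
    apply Real.abs_le_sqrt
    simpa using Finset.sum_mul_sq_le_sq_mul_sq Finset.univ (fun j => pd f j x) (fun j => y j)
  calc _ ≤ (√(∑ j, pd f j x ^ 2)) ^ 2 := pow_le_pow_left₀ (norm_nonneg _) this 2
    _ = _ := Real.sq_sqrt h0

lemma gns : ∃ K : NNReal, ∀ f : R3 → ℝ, Sm f → HasCompactSupport f →
    eLpNorm f (6 : NNReal) volume ≤ K * eLpNorm (fderiv ℝ f) (2 : NNReal) volume := by
  refine ⟨eLpNormLESNormFDerivOfEqInnerConst (volume : Measure R3) (2 : NNReal), fun f hf hc => ?_⟩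
  have hdim : Module.finrank ℝ R3 = 3 := by simp
  exact eLpNorm_le_eLpNorm_fderiv_of_eq_inner (F' := ℝ) (volume : Measure R3) (u := f) (p := 2) (p' := 6)
    (hf.of_le (by simp)) hc (by norm_num) (by rw [hdim]; norm_num) (by rw [hdim]; norm_num)

lemma eL6 {f : R3 → ℝ} (hf : Continuous f) (hc : HasCompactSupport f) :
    eLpNorm f (6 : NNReal) volume = ENNReal.ofReal ((∫ x, f x ^ 6) ^ (1/6 : ℝ)) := by
  have hm : MemLp f (6 : NNReal) volume := hf.memLp_of_hasCompactSupport hc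
  rw [hm.eLpNorm_eq_integral_rpow_norm (by norm_num) (by norm_num)]
  have e : ((6 : NNReal) : ENNReal).toReal = 6 := by simp
  rw [e]
  have e2 : ∀ x, ‖f x‖ ^ (6:ℝ) = f x ^ 6 := fun x => by
    have : ‖f x‖ ^ (6:ℝ) = ‖f x‖ ^ (6:ℕ) := by exact_mod_cast Real.rpow_natCast _ 6
    rw [this, Real.norm_eq_abs, Even.pow_abs ⟨3, rfl⟩]
  simp only [e2, one_div]

lemma eL2 {f : R3 → R3 →L[ℝ] ℝ} (hf : Continuous f) (hc : HasCompactSupport f) :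
    eLpNorm f (2 : NNReal) volume = ENNReal.ofReal ((∫ x, ‖f x‖ ^ 2) ^ (1/2 : ℝ)) := by
  have hm : MemLp f (2 : NNReal) volume := hf.memLp_of_hasCompactSupport hc
  rw [hm.eLpNorm_eq_integral_rpow_norm (by norm_num) (by norm_num)]
  have e : ((2 : NNReal) : ENNReal).toReal = 2 := by simp
  rw [e]
  have e2 : ∀ x, ‖f x‖ ^ (2:ℝ) = ‖f x‖ ^ 2 := fun x => Real.rpow_two _
  simp only [e2, one_div]

lemma six_arith {a b K : ℝ} (ha : 0 ≤ a) (hb : 0 ≤ b) (h : a ^ (1/6 : ℝ) ≤ K * b ^ (1/2 : ℝ)) :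
    a ≤ K ^ 6 * b ^ 3 := by
  have h6 := pow_le_pow_left₀ (by positivity) h 6
  have e1 : (a ^ (1/6 : ℝ)) ^ 6 = a := by
    rw [← Real.rpow_natCast, ← Real.rpow_mul ha]; norm_num
  have e2 : (b ^ (1/2 : ℝ)) ^ 6 = b ^ 3 := by
    rw [← Real.rpow_natCast, ← Real.rpow_mul hb, ← Real.rpow_natCast]; norm_num
  rwa [mul_pow, e1, e2] at h6

lemma sob0 : ∃ C : ℝ, 0 < C ∧ ∀ f : R3 → ℝ, Sm f → HasCompactSupport f →
    ∫ x, f x ^ 6 ≤ C * (∫ x, ∑ j, pd f j x ^ 2) ^ 3 := by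
  obtain ⟨K, hK⟩ := gns
  refine ⟨(K : ℝ) ^ 6 + 1, by positivity, ?_⟩
  intro f hf hc
  have hS := hK f hf hc
  have hfd : Continuous (fderiv ℝ f) := hf.continuous_fderiv (by simp)
  have i2 : Integrable (fun x => ‖fderiv ℝ f x‖ ^ 2) :=
    sq_int (f := fun x => ‖fderiv ℝ f x‖) hfd.norm (hc.fderiv (𝕜 := ℝ)).norm
  have i3 : Integrable (fun x => ∑ j, pd f j x ^ 2) := integrable_finsetSum _ fun j _ =>
    sq_int (hf.pd j).cont (pd_cs hc j)
  have n6 : 0 ≤ ∫ x, f x ^ 6 := integral_nonneg fun x => Even.pow_nonneg ⟨3, rfl⟩ _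
  have n2 : 0 ≤ ∫ x, ‖fderiv ℝ f x‖ ^ 2 := integral_nonneg fun x => sq_nonneg _
  rw [eL6 hf.cont hc, eL2 hfd (hc.fderiv (𝕜 := ℝ)), ← ENNReal.ofReal_coe_nnreal, ← ENNReal.ofReal_mul (NNReal.coe_nonneg K),
    ENNReal.ofReal_le_ofReal_iff (mul_nonneg (NNReal.coe_nonneg K) (Real.rpow_nonneg n2 _))] at hS
  have h6 := six_arith n6 n2 hS
  have h7 := pow_le_pow_left₀ n2 (integral_mono i2 i3 (norm_fderiv_sq f)) 3
  have hK0 : (0:ℝ) ≤ (K:ℝ) ^ 6 := pow_nonneg (NNReal.coe_nonneg K) 6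
  have h8 := mul_le_mul_of_nonneg_left h7 hK0
  have h9 : 0 ≤ (∫ x, ∑ j, pd f j x ^ 2) ^ 3 := (pow_nonneg n2 3).trans h7
  linarith

lemma sob1 : ∃ C : ℝ, 0 < C ∧ ∀ w : R3 → ℝ, Sm w → ∀ ρ s : ℝ, 0 ≤ ρ → 0 < s →
    ∫ x in CB ρ, w x ^ 6 ≤ C * ((∫ x in CB (ρ + s), ∑ j, pd w j x ^ 2) +
      (s⁻¹) ^ 2 * ∫ x in CB (ρ + s), w x ^ 2) ^ 3 := by
  obtain ⟨C, hC, hS⟩ := sob0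
  obtain ⟨C0, hC0, hcut⟩ := cutoff
  refine ⟨C * (2 + 6 * C0 ^ 2) ^ 3, by positivity, ?_⟩
  intro w hw ρ s hρ hs
  obtain ⟨χ, hχ, hsup, hn, h1, hone, hd⟩ := hcut ρ s hρ hs
  have hf : Sm (fun x => χ x * w x) := hχ.mul hw
  have ts : tsupport (fun x => χ x * w x) ⊆ CB (ρ + s) :=
    (closure_mono (Function.support_mul_subset_left _ _)).trans hsup
  have key := hS _ hf (csb ts)
  have hsi : 0 < s⁻¹ := by positivity
  have z : ∀ x, x ∉ CB (ρ + s) → χ x * w x = 0 := fun x hx =>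
    image_eq_zero_of_notMem_tsupport (f := fun x => χ x * w x) (fun h => hx (ts h))
  have a : ∫ x in CB ρ, w x ^ 6 ≤ ∫ x, (χ x * w x) ^ 6 := by
    rw [int_eq_setInt (f := fun x => (χ x * w x) ^ 6) (r := ρ + s) fun x hx => by rw [z x hx]; simp]
    have e : ∫ x in CB ρ, w x ^ 6 = ∫ x in CB ρ, (χ x * w x) ^ 6 :=
      setIntegral_congr_fun measurableSet_closedBall fun x hx => by simp [hone x hx]
    rw [e]
    exact setInt_mono_r (hf.cont.pow 6) (fun x => Even.pow_nonneg (by decide) _) (by linarith)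
  have b : ∫ x, ∑ j, pd (fun x => χ x * w x) j x ^ 2 ≤ (2 + 6 * C0 ^ 2) *
      ((∫ x in CB (ρ + s), ∑ j, pd w j x ^ 2) + (s⁻¹) ^ 2 * ∫ x in CB (ρ + s), w x ^ 2) := by
    rw [int_eq_setInt (f := fun x => ∑ j, pd (fun x => χ x * w x) j x ^ 2) (r := ρ + s) fun x hx =>
      Finset.sum_eq_zero fun j _ => by
        rw [image_eq_zero_of_notMem_tsupport (f := pd (fun x => χ x * w x) j)
          (fun h => hx (ts (pd_tsupport _ _ h)))]; simp]
    have c1 : Continuous (fun x => ∑ j, pd w j x ^ 2) :=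
      continuous_finsetSum _ fun j _ => (hw.pd j).cont.pow 2
    have c2 : Continuous (fun x => w x ^ 2) := hw.cont.pow 2
    have h2 := setInt_le (f := fun x => ∑ j, pd (fun x => χ x * w x) j x ^ 2)
      (g := fun x => 2 * (∑ j, pd w j x ^ 2) + 6 * C0 ^ 2 * (s⁻¹) ^ 2 * w x ^ 2)
      (continuous_finsetSum _ fun j _ => (hf.pd j).cont.pow 2) (by fun_prop) (ρ + s) ?_
    · rw [integral_add (intOn (by fun_prop) _) (intOn (by fun_prop) _), integral_const_mul,
        integral_const_mul] at h2
      have p1 : 0 ≤ ∫ x in CB (ρ + s), ∑ j, pd w j x ^ 2 :=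
        integral_nonneg fun x => Finset.sum_nonneg fun _ _ => sq_nonneg _
      have p2 : 0 ≤ ∫ x in CB (ρ + s), w x ^ 2 := integral_nonneg fun x => sq_nonneg _
      have := mul_nonneg (sq_nonneg C0) p1
      have := mul_nonneg (sq_nonneg s⁻¹) p2
      nlinarith
    · intro x
      have hj : ∀ j, pd (fun x => χ x * w x) j x ^ 2 ≤ 2 * pd w j x ^ 2 + 2 * ((C0 * s⁻¹) ^ 2 * w x ^ 2) := by
        intro j
        rw [pd_mul hχ hw]
        have e3 : pd χ j x ^ 2 ≤ (C0 * s⁻¹) ^ 2 := by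
          rw [← sq_abs]; exact pow_le_pow_left₀ (abs_nonneg _) (hd j x) 2
        have e4 := mul_le_mul_of_nonneg_right e3 (sq_nonneg (w x))
        have e5 : χ x ^ 2 ≤ 1 := by have := hn x; have := h1 x; nlinarith
        have e6 := mul_le_mul_of_nonneg_right e5 (sq_nonneg (pd w j x))
        nlinarith [sq_nonneg (χ x * pd w j x - pd χ j x * w x)]
      have := Finset.sum_le_sum (s := Finset.univ) fun j (_ : j ∈ Finset.univ) => hj j
      refine this.trans (le_of_eq ?_)
      rw [Finset.sum_add_distrib, ← Finset.mul_sum]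
      simp only [Finset.sum_const, Finset.card_univ, Fintype.card_fin, nsmul_eq_mul]
      push_cast
      ring
  have b0 : 0 ≤ ∫ x, ∑ j, pd (fun x => χ x * w x) j x ^ 2 :=
    integral_nonneg fun x => Finset.sum_nonneg fun _ _ => sq_nonneg _
  refine a.trans (key.trans ?_)
  have := mul_le_mul_of_nonneg_left (pow_le_pow_left₀ b0 b 3) hC.le
  refine this.trans (le_of_eq ?_)
  ring

lemma inner_pow_mean (a : Fin 7 → ℝ) (ha : ∀ i, 0 ≤ a i) : (∑ i, a i) ^ 3 ≤ 49 * ∑ i, a i ^ 3 := by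
  have h := pow_sum_div_card_le_sum_pow (s := Finset.univ) (f := a) (fun i _ => ha i) 2
  simp only [Finset.card_univ, Fintype.card_fin] at h
  norm_num at h
  linarith

lemma sob : ∃ C : ℝ, 0 < C ∧ ∀ (u v : Fin 3 → R3 → ℝ) (P θ : R3 → ℝ), Sol u v P θ →
    ∀ ρ s : ℝ, 0 ≤ ρ → 0 < s → ∫ x in CB ρ, NN u v θ x ^ 3 ≤ C * (
      (∫ x in CB (ρ + s), DD u v θ x) + (s⁻¹) ^ 2 * ∫ x in CB (ρ + s), NN u v θ x) ^ 3 := by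
  obtain ⟨C, hC, h⟩ := sob1
  refine ⟨343 * C, by positivity, ?_⟩
  intro u v P θ S ρ s hρ hs
  have hU := (U2_sm S.su).cont
  have hN := (NN_sm S).cont
  have hD := (DD_sm S).cont
  set Y := (∫ x in CB (ρ + s), DD u v θ x) + (s⁻¹) ^ 2 * ∫ x in CB (ρ + s), NN u v θ x with hY
  have hsi : 0 < s⁻¹ := by positivity
  have gen : ∀ w : R3 → ℝ, Sm w → (∀ x, w x ^ 2 ≤ NN u v θ x) → (∀ j x, pd w j x ^ 2 ≤ Dj u v θ j x) →
      ∫ x in CB ρ, w x ^ 6 ≤ C * Y ^ 3 := by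
    intro w hw h1 h2
    refine (h w hw ρ s hρ hs).trans (mul_le_mul_of_nonneg_left ?_ hC.le)
    have p1 : 0 ≤ ∫ x in CB (ρ + s), ∑ j, pd w j x ^ 2 :=
      integral_nonneg fun x => Finset.sum_nonneg fun _ _ => sq_nonneg _
    have p2 : 0 ≤ ∫ x in CB (ρ + s), w x ^ 2 := integral_nonneg fun x => sq_nonneg _
    refine pow_le_pow_left₀ (by positivity) (add_le_add ?_ (mul_le_mul_of_nonneg_left ?_ (by positivity))) 3
    · exact setInt_le (continuous_finsetSum _ fun j _ => (hw.pd j).cont.pow 2) hD _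
        fun x => Finset.sum_le_sum fun j _ => h2 j x
    · exact setInt_le (hw.cont.pow 2) hN _ h1
  have gu : ∀ i, ∫ x in CB ρ, u i x ^ 6 ≤ C * Y ^ 3 := fun i => gen (u i) (S.su i)
    (fun x => by have := ui_sq_le u i x; have := U2_nonneg v x; unfold NN; nlinarith [sq_nonneg (θ x)])
    (fun j x => by
      have := ui_sq_le (fun i => pd (u i) j) i x
      have := U2_nonneg (fun i => pd (v i) j) x
      unfold U2 at *; unfold Dj; nlinarith [sq_nonneg (pd θ j x)])
  have gv : ∀ i, ∫ x in CB ρ, v i x ^ 6 ≤ C * Y ^ 3 := fun i => gen (v i) (S.sv i)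
    (fun x => by have := ui_sq_le v i x; have := U2_nonneg u x; unfold NN; nlinarith [sq_nonneg (θ x)])
    (fun j x => by
      have := ui_sq_le (fun i => pd (v i) j) i x
      have := U2_nonneg (fun i => pd (u i) j) x
      unfold U2 at *; unfold Dj; nlinarith [sq_nonneg (pd θ j x)])
  have gt : ∫ x in CB ρ, θ x ^ 6 ≤ C * Y ^ 3 := gen θ S.sθ
    (fun x => by have := U2_nonneg v x; have := U2_nonneg u x; unfold NN; nlinarith [sq_nonneg (θ x)])
    (fun j x => by
      have := U2_nonneg (fun i => pd (v i) j) x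
      have := U2_nonneg (fun i => pd (u i) j) x
      unfold U2 at *; unfold Dj; nlinarith [sq_nonneg (pd θ j x)])
  have hpt : ∀ x, NN u v θ x ^ 3 ≤ 49 * (∑ i, u i x ^ 6 + (∑ i, v i x ^ 6 + θ x ^ 6)) := by
    intro x
    have hm := inner_pow_mean (fun i : Fin 7 => ![u 0 x ^ 2, u 1 x ^ 2, u 2 x ^ 2, v 0 x ^ 2, v 1 x ^ 2, v 2 x ^ 2, θ x ^ 2] i)
      (fun i => by fin_cases i <;> simp <;> positivity)
    simp only [Fin.sum_univ_succ] at hm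
    unfold NN U2
    simp only [Fin.sum_univ_three]
    simp at hm
    ring_nf at hm ⊢
    linarith
  have hint := setInt_le (f := fun x => NN u v θ x ^ 3) (hN.pow 3) (by
    have := fun i => (S.su i).cont; have := fun i => (S.sv i).cont; have := S.sθ.cont; fun_prop) ρ hpt
  have cu : ∀ i, Continuous (fun x => u i x ^ 6) := fun i => (S.su i).cont.pow 6
  have cv : ∀ i, Continuous (fun x => v i x ^ 6) := fun i => (S.sv i).cont.pow 6
  have ct : Continuous (fun x => θ x ^ 6) := S.sθ.cont.pow 6
  rw [integral_const_mul, integral_add (intOn (by fun_prop) _) (intOn (by fun_prop) _),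
    integral_add (intOn (by fun_prop) _) (intOn (by fun_prop) _),
    integral_finsetSum _ (fun i _ => intOn (cu i) _), integral_finsetSum _ (fun i _ => intOn (cv i) _)] at hint
  simp only [Fin.sum_univ_three] at hint
  linarith [gu 0, gu 1, gu 2, gv 0, gv 1, gv 2]

lemma vol_ball {R r : ℝ} (hR : 0 ≤ R) (hr : r ≤ 2 * R) :
    volume.real (CB r) ≤ R ^ 3 * volume.real (CB 2) := by
  have h := Measure.addHaar_closedBall_mul (volume : Measure R3) 0 hR (s := 2) (by norm_num)
  have hdim : Module.finrank ℝ R3 = 3 := by simp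
  rw [hdim] at h
  have h' : volume.real (CB (R * 2)) = R ^ 3 * volume.real (CB 2) := by
    rw [measureReal_def, h, ENNReal.toReal_mul, ENNReal.toReal_ofReal (by positivity), ← measureReal_def]
  rw [← h']
  exact measureReal_mono (closedBall_subset_closedBall (by linarith)) measure_closedBall_lt_top.ne

section
variable {f : R3 → ℝ} {q : ℝ}

lemma rp_cont (hf : Continuous f) (hq : 1 ≤ q) : Continuous (fun x => f x ^ q) :=
  hf.rpow_const fun x => Or.inr (by linarith)

lemma int_le_M (h0 : ∀ x, 0 ≤ f x) (hi : Integrable (fun x => f x ^ q)) (B : Set R3) :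
    ∫ x in B, f x ^ q ≤ ∫ x, f x ^ q :=
  setIntegral_le_integral hi (Eventually.of_forall fun x => Real.rpow_nonneg (h0 x) _)

lemma M_nonneg (h0 : ∀ x, 0 ≤ f x) : 0 ≤ ∫ x, f x ^ q :=
  integral_nonneg fun x => Real.rpow_nonneg (h0 x) _

/-- `t^m ≤ W^(m-1)... ` bounds for small `t`. -/
lemma small_t {t W : ℝ} (ht : 0 ≤ t) (hW : 1 ≤ W) (htW : t ≤ W ^ 2) (m : ℕ) (hm : 1 ≤ m) (hq1 : 1 ≤ q)
    (hqm : q ≤ m) : t ^ m ≤ (W ^ 2) ^ (m - 1) * t ^ q := by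
  have hW2 : 1 ≤ W ^ 2 := one_le_pow₀ hW
  rcases ht.eq_or_lt with h | h
  · rw [← h, zero_pow (by omega)]; positivity
  · have e : t ^ m = t ^ ((m:ℝ) - q) * t ^ q := by
      rw [← Real.rpow_add h, sub_add_cancel, Real.rpow_natCast]
    rw [e]
    apply mul_le_mul_of_nonneg_right _ (Real.rpow_nonneg ht _)
    calc t ^ ((m:ℝ) - q) ≤ (W ^ 2) ^ ((m:ℝ) - q) := Real.rpow_le_rpow ht htW (by linarith)
      _ ≤ (W ^ 2) ^ ((m - 1 : ℕ) : ℝ) := by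
        apply Real.rpow_le_rpow_of_exponent_le hW2
        push_cast [Nat.cast_sub hm]
        linarith
      _ = _ := Real.rpow_natCast _ _

lemma pt4 {t W : ℝ} (ht : 0 ≤ t) (hW : 1 ≤ W) (hq1 : 1 ≤ q) (hq : q ≤ 4) :
    t ^ 4 ≤ (W ^ 4)⁻¹ * t ^ 6 + W ^ 6 * t ^ q := by
  have hp := Real.rpow_nonneg ht q
  rcases le_total t (W ^ 2) with h | h
  · have := small_t ht hW h 4 (by norm_num) hq1 (by exact_mod_cast hq)
    have e : (W ^ 2) ^ (4 - 1) = W ^ 6 := by ring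
    rw [e] at this
    have : 0 ≤ (W ^ 4)⁻¹ * t ^ 6 := by positivity
    linarith
  · have h2 : W ^ 4 ≤ t ^ 2 := by
      calc W ^ 4 = (W ^ 2) ^ 2 := by ring
        _ ≤ t ^ 2 := pow_le_pow_left₀ (by positivity) h 2
    have : t ^ 4 ≤ (W ^ 4)⁻¹ * t ^ 6 := by
      rw [← div_eq_inv_mul, le_div_iff₀ (by positivity)]
      nlinarith [mul_le_mul_of_nonneg_left h2 (by positivity : 0 ≤ t ^ 4)]
    have : 0 ≤ W ^ 6 * t ^ q := by positivity
    linarith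

lemma pt2 {t W : ℝ} (ht : 0 ≤ t) (hW : 1 ≤ W) (hq1 : 1 ≤ q) (hq : q ≤ 2) :
    t ^ 2 ≤ (W ^ 8)⁻¹ * t ^ 6 + W ^ 2 * t ^ q := by
  have hp := Real.rpow_nonneg ht q
  rcases le_total t (W ^ 2) with h | h
  · have := small_t ht hW h 2 (by norm_num) hq1 (by exact_mod_cast hq)
    have e : (W ^ 2) ^ (2 - 1) = W ^ 2 := by ring
    rw [e] at this
    have : 0 ≤ (W ^ 8)⁻¹ * t ^ 6 := by positivity
    linarith
  · have h2 : W ^ 8 ≤ t ^ 4 := by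
      calc W ^ 8 = (W ^ 2) ^ 4 := by ring
        _ ≤ t ^ 4 := pow_le_pow_left₀ (by positivity) h 4
    have : t ^ 2 ≤ (W ^ 8)⁻¹ * t ^ 6 := by
      rw [← div_eq_inv_mul, le_div_iff₀ (by positivity)]
      nlinarith [mul_le_mul_of_nonneg_left h2 (by positivity : 0 ≤ t ^ 2)]
    have : 0 ≤ W ^ 2 * t ^ q := by positivity
    linarith

lemma ptk {t κ : ℝ} (ht : 0 ≤ t) (hκ : 0 < κ) (m : ℕ) (hq : (m:ℝ) ≤ q) :
    t ^ m ≤ κ ^ m + κ ^ ((m:ℝ) - q) * t ^ q := by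
  have hp := Real.rpow_nonneg ht q
  have hk := Real.rpow_nonneg hκ.le ((m:ℝ) - q)
  rcases le_total t κ with h | h
  · have := pow_le_pow_left₀ ht h m
    have := mul_nonneg hk hp
    linarith
  · have h0 : 0 < t := hκ.trans_le h
    have e : t ^ m = t ^ ((m:ℝ) - q) * t ^ q := by
      rw [← Real.rpow_add h0, sub_add_cancel, Real.rpow_natCast]
    have : t ^ ((m:ℝ) - q) ≤ κ ^ ((m:ℝ) - q) :=
      Real.rpow_le_rpow_of_nonpos hκ h (by linarith)
    have := mul_le_mul_of_nonneg_right this hp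
    rw [e]
    have := pow_nonneg hκ.le m
    linarith

lemma A14 (hf : Continuous f) (h0 : ∀ x, 0 ≤ f x) (hq1 : 1 ≤ q) (hi : Integrable (fun x => f x ^ q))
    {g : R3 → ℝ} (hg : Continuous g) (hfg : ∀ x, f x ^ 6 ≤ g x) {r W : ℝ} (hW : 1 ≤ W)
    (hWX : W ^ 10 = 1 + ∫ x in CB r, g x) :
    (q ≤ 4 → ∫ x in CB r, f x ^ 4 ≤ (1 + ∫ x, f x ^ q) * W ^ 6) ∧
    (q ≤ 2 → ∫ x in CB r, f x ^ 2 ≤ (1 + ∫ x, f x ^ q) * W ^ 2) := by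
  have hW0 : 0 < W := by linarith
  have hX : ∫ x in CB r, g x ≤ W ^ 10 := by linarith
  have hM := int_le_M h0 hi (CB r)
  have hc := rp_cont hf hq1
  constructor
  · intro hq
    have h := setInt_le (f := fun x => f x ^ 4) (g := fun x => (W ^ 4)⁻¹ * g x + W ^ 6 * f x ^ q)
      (hf.pow 4) (by fun_prop) r fun x => by
        have := pt4 (h0 x) hW hq1 hq
        have := mul_le_mul_of_nonneg_left (hfg x) (by positivity : 0 ≤ (W ^ 4)⁻¹)
        linarith
    rw [integral_add (intOn (by fun_prop) _) (intOn (by fun_prop) _), integral_const_mul,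
      integral_const_mul] at h
    have h1 := mul_le_mul_of_nonneg_left hX (by positivity : 0 ≤ (W ^ 4)⁻¹)
    have h2 := mul_le_mul_of_nonneg_left hM (by positivity : 0 ≤ W ^ 6)
    have e : (W ^ 4)⁻¹ * W ^ 10 = W ^ 6 := by field_simp
    rw [e] at h1
    linarith
  · intro hq
    have h := setInt_le (f := fun x => f x ^ 2) (g := fun x => (W ^ 8)⁻¹ * g x + W ^ 2 * f x ^ q)
      (hf.pow 2) (by fun_prop) r fun x => by
        have := pt2 (h0 x) hW hq1 hq
        have := mul_le_mul_of_nonneg_left (hfg x) (by positivity : 0 ≤ (W ^ 8)⁻¹)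
        linarith
    rw [integral_add (intOn (by fun_prop) _) (intOn (by fun_prop) _), integral_const_mul,
      integral_const_mul] at h
    have h1 := mul_le_mul_of_nonneg_left hX (by positivity : 0 ≤ (W ^ 8)⁻¹)
    have h2 := mul_le_mul_of_nonneg_left hM (by positivity : 0 ≤ W ^ 2)
    have e : (W ^ 8)⁻¹ * W ^ 10 = W ^ 2 := by field_simp
    rw [e] at h1
    linarith

lemma kpow {R δ : ℝ} (hR : 0 < R) (hδ : 0 < δ) (hq : 0 < q) (m : ℕ) :
    (δ * R ^ (-(3 / q))) ^ m * R ^ 3 = δ ^ m * R ^ (3 - 3 * m / q) ∧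
    (δ * R ^ (-(3 / q))) ^ ((m:ℝ) - q) = δ ^ ((m:ℝ) - q) * R ^ (3 - 3 * m / q) := by
  constructor
  · rw [mul_pow, ← Real.rpow_natCast (R ^ _), ← Real.rpow_mul hR.le, mul_assoc]
    congr 1
    rw [← Real.rpow_natCast R 3, ← Real.rpow_add hR]
    congr 1
    push_cast
    field_simp
    ring
  · rw [Real.mul_rpow hδ.le (Real.rpow_nonneg hR.le _), ← Real.rpow_mul hR.le]
    congr 2
    field_simp
    ring

/-- general bound on a measurable subset of a ball -/
lemma A3 (hf : Continuous f) (h0 : ∀ x, 0 ≤ f x) (hq1 : 1 ≤ q) (hi : Integrable (fun x => f x ^ q))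
    (m : ℕ) (hq : (m:ℝ) ≤ q) {δ R r : ℝ} (hδ : 0 < δ) (hR : 0 < R) (hr : r ≤ 2 * R)
    {B : Set R3} (hB : B ⊆ CB r) (hBm : MeasurableSet B) :
    ∫ x in B, f x ^ m ≤ (volume.real (CB 2) * δ ^ m + δ ^ ((m:ℝ) - q) * ∫ x in B, f x ^ q) *
      R ^ (3 - 3 * m / q) := by
  have hκ : 0 < δ * R ^ (-(3 / q)) := by positivity
  set κ := δ * R ^ (-(3 / q))
  obtain ⟨k1, k2⟩ := kpow (q := q) hR hδ (by linarith) m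
  have hc := rp_cont hf hq1
  have I : ∀ {g : R3 → ℝ}, Continuous g → IntegrableOn g B := fun hg => (intOn hg r).mono_set hB
  have h : ∫ x in B, f x ^ m ≤ ∫ x in B, (κ ^ m + κ ^ ((m:ℝ) - q) * f x ^ q) :=
    integral_mono (I (hf.pow m)) (I (by fun_prop)) fun x => ptk (h0 x) hκ m hq
  rw [integral_add (I (by fun_prop)) (I (by fun_prop)), integral_const_mul, setIntegral_const,
    smul_eq_mul] at h
  have hv : volume.real B ≤ R ^ 3 * volume.real (CB 2) :=
    (measureReal_mono hB measure_closedBall_lt_top.ne).trans (vol_ball hR.le hr)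
  have h2 := mul_le_mul_of_nonneg_right hv (by positivity : 0 ≤ κ ^ m)
  have e : R ^ 3 * volume.real (CB 2) * κ ^ m = volume.real (CB 2) * (δ ^ m * R ^ (3 - 3 * m / q)) := by
    rw [← k1]; ring
  rw [e] at h2
  rw [k2] at h
  refine h.trans ((add_le_add_left h2 _).trans (le_of_eq ?_))
  ring

lemma A3' (hf : Continuous f) (h0 : ∀ x, 0 ≤ f x) (hq1 : 1 ≤ q) (hi : Integrable (fun x => f x ^ q))
    (m : ℕ) (hq : (m:ℝ) ≤ q) {R r : ℝ} (hR : 0 < R) (hr : r ≤ 2 * R) :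
    ∫ x in CB r, f x ^ m ≤ (volume.real (CB 2) + ∫ x, f x ^ q) * R ^ (3 - 3 * m / q) := by
  have h := A3 hf h0 hq1 hi m hq one_pos hR hr subset_rfl measurableSet_closedBall
  simp only [one_pow, Real.one_rpow, one_mul, mul_one] at h
  refine h.trans (mul_le_mul_of_nonneg_right ?_ (by positivity))
  have := int_le_M h0 hi (CB r)
  linarith

lemma tail_small (h0 : ∀ x, 0 ≤ f x) (hi : Integrable (fun x => f x ^ q)) {η : ℝ} (hη : 0 < η) :
    ∃ ρ0 : ℝ, ∫ x in (CB ρ0)ᶜ, f x ^ q ≤ η := by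
  have h := tendsto_setIntegral_of_antitone (μ := volume) (f := fun x => f x ^ q)
    (s := fun n : ℕ => (CB n)ᶜ) (fun n => measurableSet_closedBall.compl)
    (fun m n hmn => Set.compl_subset_compl.mpr (closedBall_subset_closedBall (by exact_mod_cast hmn)))
    ⟨0, hi.integrableOn⟩
  have he : ⋂ n : ℕ, (CB (n:ℝ))ᶜ = ∅ := by
    ext x
    simp only [Set.mem_iInter, Set.mem_empty_iff_false, iff_false, not_forall, Set.mem_compl_iff, not_not]
    obtain ⟨n, hn⟩ := exists_nat_ge ‖x‖
    exact ⟨n, by simpa using hn⟩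
  rw [he] at h
  simp only [Measure.restrict_empty, integral_zero_measure] at h
  obtain ⟨n, hn⟩ := ((tendsto_order.mp h).2 η hη).exists
  exact ⟨n, hn.le⟩

lemma rneg_small {a : ℝ} (ha : 0 < a) (K : ℝ) {η : ℝ} (hη : 0 < η) :
    ∃ R0 : ℝ, 1 ≤ R0 ∧ ∀ R, R0 ≤ R → K * R ^ (-a) ≤ η := by
  have h := (tendsto_rpow_neg_atTop ha).const_mul K
  rw [mul_zero] at h
  have h2 := (tendsto_order.mp h).2 η hη
  obtain ⟨R0, hR0⟩ := (h2.and (eventually_ge_atTop 1)).exists_forall_of_atTop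
  exact ⟨R0, (hR0 R0 le_rfl).2, fun R hR => (hR0 R hR).1.le⟩

/-- little-o -/
lemma A5 (hf : Continuous f) (h0 : ∀ x, 0 ≤ f x) (hq3 : 3 ≤ q) (hi : Integrable (fun x => f x ^ q))
    {η : ℝ} (hη : 0 < η) : ∃ R0 : ℝ, 1 ≤ R0 ∧ ∀ R, R0 ≤ R → ∀ r, r ≤ 2 * R →
      ∫ x in CB r, f x ^ 2 ≤ η * R ^ (3 - 6 / q) := by
  set V := volume.real (CB 2)
  have hV : 0 ≤ V := measureReal_nonneg
  obtain ⟨δ, hδ, hδV⟩ : ∃ δ : ℝ, 0 < δ ∧ V * δ ^ 2 ≤ η / 3 := by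
    refine ⟨√(η / (3 * (V + 1))), by positivity, ?_⟩
    rw [Real.sq_sqrt (by positivity), ← mul_div_assoc, div_le_iff₀ (by positivity)]
    nlinarith
  have hd : 0 < δ ^ ((2:ℝ) - q) := by positivity
  obtain ⟨ρ0, hρ0⟩ := tail_small h0 hi (η := η / 3 / δ ^ ((2:ℝ) - q)) (by positivity)
  have ha : 0 < 3 - 6 / q := by
    have : 6 / q ≤ 2 := by rw [div_le_iff₀ (by linarith)]; linarith
    linarith
  obtain ⟨R0, hR0, hs⟩ := rneg_small ha (∫ x in CB ρ0, f x ^ 2) (η := η / 3) (by positivity)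
  refine ⟨R0, hR0, fun R hR r hr => ?_⟩
  have hRp : 0 < R := by linarith
  have c2 : Continuous (fun x => f x ^ 2) := hf.pow 2
  have n2 : ∀ x, 0 ≤ f x ^ 2 := fun x => sq_nonneg _
  have hsplit : ∫ x in CB r, f x ^ 2 = (∫ x in CB r ∩ CB ρ0, f x ^ 2) + ∫ x in CB r \ CB ρ0, f x ^ 2 :=
    (integral_inter_add_sdiff measurableSet_closedBall (intOn c2 r)).symm
  have h1 : ∫ x in CB r ∩ CB ρ0, f x ^ 2 ≤ ∫ x in CB ρ0, f x ^ 2 :=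
    setIntegral_mono_set (intOn c2 ρ0) (Eventually.of_forall n2) (Eventually.of_forall Set.inter_subset_right)
  have h2 := A3 hf h0 (by linarith) hi 2 (by push_cast; linarith) hδ hRp hr
    (B := CB r \ CB ρ0) Set.sdiff_subset (measurableSet_closedBall.diff measurableSet_closedBall)
  have h3 : ∫ x in CB r \ CB ρ0, f x ^ q ≤ ∫ x in (CB ρ0)ᶜ, f x ^ q :=
    setIntegral_mono_set hi.integrableOn (Eventually.of_forall fun x => Real.rpow_nonneg (h0 x) _)
      (Eventually.of_forall fun x hx => hx.2)
  have h4 := hs R hR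
  have hRR : R ^ (-(3 - 6 / q)) * R ^ (3 - 6 / q) = 1 := by
    rw [← Real.rpow_add hRp]; simp
  have hp : 0 < R ^ (3 - 6 / q) := by positivity
  have h5 : ∫ x in CB ρ0, f x ^ 2 ≤ η / 3 * R ^ (3 - 6 / q) := by
    have := mul_le_mul_of_nonneg_right h4 hp.le
    rw [mul_assoc, hRR, mul_one] at this
    exact this
  have h6 : δ ^ ((2:ℝ) - q) * ∫ x in CB r \ CB ρ0, f x ^ q ≤ η / 3 := by
    have := (le_div_iff₀ hd).mp (h3.trans hρ0)
    linarith
  push_cast at h2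
  have e : (3:ℝ) - 3 * 2 / q = 3 - 6 / q := by norm_num
  rw [e] at h2
  have h7 := mul_le_mul_of_nonneg_right (add_le_add hδV h6) hp.le
  rw [hsplit]
  linarith

lemma Bq (hf : Continuous f) (h0 : ∀ x, 0 ≤ f x) (hq1 : 1 ≤ q) (hq3 : q < 3)
    (hi : Integrable (fun x => f x ^ q))
    {g : R3 → ℝ} (hg : Continuous g) (hfg : ∀ x, f x ^ 6 ≤ g x) {η : ℝ} (hη : 0 < η) :
    ∃ R0 : ℝ, 1 ≤ R0 ∧ ∀ R, R0 ≤ R → ∀ r W, r ≤ 2 * R → 1 ≤ W → W ^ 10 = 1 + ∫ x in CB r, g x →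
      R⁻¹ * ∫ x in CB r, f x ^ 2 ≤ η * W ^ 3 := by
  rcases le_total q 2 with h2 | h2
  · obtain ⟨R0, hR0, hs⟩ := rneg_small one_pos (1 + ∫ x, f x ^ q) hη
    refine ⟨R0, hR0, fun R hR r W hr hW hWX => ?_⟩
    have hRp : 0 < R := by linarith
    have h := (A14 hf h0 hq1 hi hg hfg hW hWX).2 h2
    have hs' := hs R hR
    rw [Real.rpow_neg_one] at hs'
    have h3 := mul_le_mul_of_nonneg_left h (by positivity : 0 ≤ R⁻¹)
    have h4 := mul_le_mul_of_nonneg_right hs' (by positivity : 0 ≤ W ^ 2)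
    have h5 : W ^ 2 ≤ W ^ 3 := pow_le_pow_right₀ hW (by norm_num)
    have h6 := mul_le_mul_of_nonneg_left h5 hη.le
    linarith
  · have ha : 0 < 6 / q - 2 := by
      have : 2 < 6 / q := by rw [lt_div_iff₀ (by linarith)]; linarith
      linarith
    obtain ⟨R0, hR0, hs⟩ := rneg_small ha (volume.real (CB 2) + ∫ x, f x ^ q) hη
    refine ⟨R0, hR0, fun R hR r W hr hW hWX => ?_⟩
    have hRp : 0 < R := by linarith
    have h := A3' hf h0 hq1 hi 2 (by exact_mod_cast h2) hRp hr
    have e : R⁻¹ * R ^ (3 - 3 * (2:ℕ) / q) = R ^ (-(6 / q - 2)) := by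
      rw [← Real.rpow_neg_one, ← Real.rpow_add hRp]
      congr 1
      push_cast
      ring
    have h3 := mul_le_mul_of_nonneg_left h (by positivity : 0 ≤ R⁻¹)
    have hs' := hs R hR
    rw [← e] at hs'
    have h5 : 1 ≤ W ^ 3 := one_le_pow₀ hW
    have h6 := mul_le_mul_of_nonneg_left h5 hη.le
    linarith
end

lemma sq_aux {R A B c : ℝ} (hA : 0 ≤ A) (hB : 0 ≤ B) (hc : 0 ≤ c)
    (h : (R⁻¹) ^ 2 * (A * B) ≤ c ^ 2) : R⁻¹ * (√A * √B) ≤ c := by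
  refine le_of_abs_le (abs_le_of_sq_le_sq ?_ hc)
  rw [mul_pow, mul_pow, Real.sq_sqrt hA, Real.sq_sqrt hB]
  exact h

section
variable {f : R3 → ℝ} {p : ℝ}

lemma S1 (hf : Continuous f) (h0 : ∀ x, 0 ≤ f x) (hp3 : 3 ≤ p) (hp : p ≤ 9 / 2)
    (hi : Integrable (fun x => f x ^ p)) {η : ℝ} (hη : 0 < η) :
    ∃ R0 : ℝ, 1 ≤ R0 ∧ ∀ R, R0 ≤ R → ∀ r, r ≤ 2 * R →
      (R⁻¹) ^ 2 * ∫ x in CB r, f x ^ 2 ≤ η := by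
  obtain ⟨R0, hR0, h⟩ := A5 hf h0 hp3 hi hη
  refine ⟨R0, hR0, fun R hR r hr => ?_⟩
  have hR1 : 1 ≤ R := hR0.trans hR
  have hRp : 0 < R := by linarith
  have e : (R⁻¹) ^ 2 * R ^ (3 - 6 / p) = R ^ (1 - 6 / p) := by
    rw [← Real.rpow_neg_one, ← Real.rpow_natCast, ← Real.rpow_mul hRp.le, ← Real.rpow_add hRp]
    congr 1; push_cast; ring
  have h1 : R ^ (1 - 6 / p) ≤ 1 := by
    apply Real.rpow_le_one_of_one_le_of_nonpos hR1
    have : 1 ≤ 6 / p := by rw [le_div_iff₀ (by linarith)]; linarith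
    linarith
  have h2 := mul_le_mul_of_nonneg_left (h R hR r hr) (by positivity : 0 ≤ (R⁻¹) ^ 2)
  have h3 := mul_le_mul_of_nonneg_left h1 hη.le
  rw [← e] at h3
  linarith

lemma S1' (hf : Continuous f) (h0 : ∀ x, 0 ≤ f x) (hp3 : 3 ≤ p) (hp : p ≤ 9 / 2)
    (hi : Integrable (fun x => f x ^ p)) {η K : ℝ} (hη : 0 < η) (hK : 0 ≤ K) :
    ∃ R0 : ℝ, 1 ≤ R0 ∧ ∀ R, R0 ≤ R → ∀ r, r ≤ 2 * R → ∀ W B, 1 ≤ W → 0 ≤ B → B ≤ K * W ^ 6 →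
      R⁻¹ * (√(∫ x in CB r, f x ^ 2) * √B) ≤ η * W ^ 3 := by
  obtain ⟨R0, hR0, h⟩ := S1 hf h0 hp3 hp hi (η := η ^ 2 / (K + 1)) (by positivity)
  refine ⟨R0, hR0, fun R hR r hr W B hW hB hBK => ?_⟩
  have hA : 0 ≤ ∫ x in CB r, f x ^ 2 := integral_nonneg fun x => sq_nonneg _
  apply sq_aux hA hB (by positivity)
  have h1 := h R hR r hr
  have hW6 : 0 < W ^ 6 := by positivity
  have h2 : B ≤ (K + 1) * W ^ 6 := by linarith
  calc (R⁻¹) ^ 2 * ((∫ x in CB r, f x ^ 2) * B) = ((R⁻¹) ^ 2 * (∫ x in CB r, f x ^ 2)) * B := by ring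
    _ ≤ (η ^ 2 / (K + 1)) * ((K + 1) * W ^ 6) := mul_le_mul h1 h2 hB (by positivity)
    _ = _ := by field_simp

lemma S2 (hf : Continuous f) (h0 : ∀ x, 0 ≤ f x) (hp3 : 3 ≤ p) (hp : p ≤ 9 / 2)
    (hi : Integrable (fun x => f x ^ p))
    {g : R3 → ℝ} (hg : Continuous g) (hfg : ∀ x, f x ^ 6 ≤ g x) {η : ℝ} (hη : 0 < η) :
    ∃ R0 : ℝ, 1 ≤ R0 ∧ ∀ R, R0 ≤ R → ∀ r W, r ≤ 2 * R → 1 ≤ W → W ^ 10 = 1 + ∫ x in CB r, g x →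
      R⁻¹ * (√(∫ x in CB r, f x ^ 2) * √(∫ x in CB r, f x ^ 4)) ≤ η * W ^ 3 := by
  have n4 : ∀ r, 0 ≤ ∫ x in CB r, f x ^ 4 := fun r => integral_nonneg fun x => by
    have := h0 x; positivity
  have n2 : ∀ r, 0 ≤ ∫ x in CB r, f x ^ 2 := fun r => integral_nonneg fun x => sq_nonneg _
  have hM := M_nonneg (q := p) h0
  rcases le_total p 4 with h4 | h4
  · obtain ⟨R0, hR0, h⟩ := S1' hf h0 hp3 hp hi (η := η) (K := 1 + ∫ x, f x ^ p) hη (by positivity)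
    exact ⟨R0, hR0, fun R hR r W hr hW hWX => h R hR r hr W _ hW (n4 r)
      ((A14 hf h0 (by linarith) hi hg hfg hW hWX).1 h4)⟩
  · set K := volume.real (CB 2) + ∫ x, f x ^ p
    have hK : 0 ≤ K := add_nonneg measureReal_nonneg hM
    obtain ⟨R0, hR0, h⟩ := A5 hf h0 hp3 hi (η := η ^ 2 / (K + 1)) (by positivity)
    refine ⟨R0, hR0, fun R hR r W hr hW hWX => ?_⟩
    have hR1 : 1 ≤ R := hR0.trans hR
    have hRp : 0 < R := by linarith
    have hW3 : 1 ≤ W ^ 3 := one_le_pow₀ hW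
    refine le_trans (sq_aux (n2 r) (n4 r) hη.le ?_) (le_mul_of_one_le_right hη.le hW3)
    have h1 := h R hR r hr
    have h2 := A3' hf h0 (by linarith) hi 4 (by exact_mod_cast h4) hRp hr
    have h2' : ∫ x in CB r, f x ^ 4 ≤ (K + 1) * R ^ (3 - 12 / p) := by
      have e : (3:ℝ) - 3 * (4:ℕ) / p = 3 - 12 / p := by norm_num
      rw [e] at h2
      have : 0 ≤ R ^ (3 - 12 / p) := by positivity
      linarith
    have e : (R⁻¹) ^ 2 * (R ^ (3 - 6 / p) * R ^ (3 - 12 / p)) = R ^ (4 - 18 / p) := by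
      rw [← Real.rpow_neg_one, ← Real.rpow_natCast, ← Real.rpow_mul hRp.le, ← Real.rpow_add hRp,
        ← Real.rpow_add hRp]
      congr 1; push_cast; ring
    have h3 : R ^ (4 - 18 / p) ≤ 1 := by
      apply Real.rpow_le_one_of_one_le_of_nonpos hR1
      have : 4 ≤ 18 / p := by rw [le_div_iff₀ (by linarith)]; linarith
      linarith
    calc (R⁻¹) ^ 2 * ((∫ x in CB r, f x ^ 2) * ∫ x in CB r, f x ^ 4)
        ≤ (R⁻¹) ^ 2 * ((η ^ 2 / (K + 1) * R ^ (3 - 6 / p)) * ((K + 1) * R ^ (3 - 12 / p))) := by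
          apply mul_le_mul_of_nonneg_left _ (by positivity)
          exact mul_le_mul h1 h2' (n4 r) (by positivity)
      _ = η ^ 2 * ((R⁻¹) ^ 2 * (R ^ (3 - 6 / p) * R ^ (3 - 12 / p))) := by field_simp
      _ ≤ η ^ 2 := by rw [e]; exact mul_le_of_le_one_right (by positivity) h3
end

lemma sqrt3 {A B C X : ℝ} (hA : 0 ≤ A) (hB : 0 ≤ B) (hC : 0 ≤ C) (h : X ≤ 3 * (A + B + C)) :
    √X ≤ 2 * (√A + √B + √C) := by
  apply Real.sqrt_le_iff.mpr
  refine ⟨by positivity, ?_⟩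
  have := Real.sq_sqrt hA
  have := Real.sq_sqrt hB
  have := Real.sq_sqrt hC
  have := mul_nonneg (Real.sqrt_nonneg A) (Real.sqrt_nonneg B)
  have := mul_nonneg (Real.sqrt_nonneg A) (Real.sqrt_nonneg C)
  have := mul_nonneg (Real.sqrt_nonneg B) (Real.sqrt_nonneg C)
  nlinarith

lemma Ebound {a b c : R3 → ℝ} (ha : Continuous a) (hb : Continuous b) (hc : Continuous c)
    (a0 : ∀ x, 0 ≤ a x) (b0 : ∀ x, 0 ≤ b x) (c0 : ∀ x, 0 ≤ c x) {p q r : ℝ}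
    (hp3 : 3 ≤ p) (hp : p ≤ 9 / 2) (hq1 : 1 ≤ q) (hq : q < 3) (hr1 : 1 ≤ r) (hr : r < 3)
    (ia : Integrable (fun x => a x ^ p)) (ib : Integrable (fun x => b x ^ q))
    (ic : Integrable (fun x => c x ^ r)) {ε : ℝ} (hε : 0 < ε) :
    ∃ R0 : ℝ, 1 ≤ R0 ∧ ∀ R, R0 ≤ R → ∀ ρ W, ρ ≤ 2 * R → 1 ≤ W →
      W ^ 10 = 1 + ∫ x in CB ρ, (a x ^ 2 + (b x ^ 2 + c x ^ 2)) ^ 3 →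
      (R⁻¹) ^ 2 * (∫ x in CB ρ, (a x ^ 2 + (b x ^ 2 + c x ^ 2))) +
      R⁻¹ * (√(∫ x in CB ρ, a x ^ 2) * √(∫ x in CB ρ, (a x ^ 2 + (b x ^ 2 + c x ^ 2)) ^ 2)) +
      R⁻¹ * (∫ x in CB ρ, (b x ^ 2 + c x ^ 2)) ≤ ε * W ^ 3 := by
  have hg : Continuous (fun x => (a x ^ 2 + (b x ^ 2 + c x ^ 2)) ^ 3) := by fun_prop
  have ag : ∀ x, a x ^ 6 ≤ (a x ^ 2 + (b x ^ 2 + c x ^ 2)) ^ 3 := fun x => by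
    calc a x ^ 6 = (a x ^ 2) ^ 3 := by ring
      _ ≤ _ := pow_le_pow_left₀ (sq_nonneg _) (by nlinarith [sq_nonneg (b x), sq_nonneg (c x)]) 3
  have bg : ∀ x, b x ^ 6 ≤ (a x ^ 2 + (b x ^ 2 + c x ^ 2)) ^ 3 := fun x => by
    calc b x ^ 6 = (b x ^ 2) ^ 3 := by ring
      _ ≤ _ := pow_le_pow_left₀ (sq_nonneg _) (by nlinarith [sq_nonneg (a x), sq_nonneg (c x)]) 3
  have cg : ∀ x, c x ^ 6 ≤ (a x ^ 2 + (b x ^ 2 + c x ^ 2)) ^ 3 := fun x => by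
    calc c x ^ 6 = (c x ^ 2) ^ 3 := by ring
      _ ≤ _ := pow_le_pow_left₀ (sq_nonneg _) (by nlinarith [sq_nonneg (b x), sq_nonneg (a x)]) 3
  have hδ : 0 < ε / 11 := by positivity
  set δ := ε / 11 with hδε
  obtain ⟨R1, hR1, k1⟩ := S1 ha a0 hp3 hp ia hδ
  obtain ⟨R2, hR2, k2⟩ := Bq hb b0 hq1 hq ib hg bg hδ
  obtain ⟨R3, hR3, k3⟩ := Bq hc c0 hr1 hr ic hg cg hδ
  obtain ⟨R4, hR4, k4⟩ := S2 ha a0 hp3 hp ia hg ag hδ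
  obtain ⟨R5, hR5, k5⟩ := S1' ha a0 hp3 hp ia (K := 1 + ∫ x, b x ^ q) hδ
    (by have := M_nonneg (q := q) b0; positivity)
  obtain ⟨R6, hR6, k6⟩ := S1' ha a0 hp3 hp ia (K := 1 + ∫ x, c x ^ r) hδ
    (by have := M_nonneg (q := r) c0; positivity)
  refine ⟨max R1 (max R2 (max R3 (max R4 (max R5 R6)))), hR1.trans (le_max_left _ _),
    fun R hR ρ W hρ hW hWX => ?_⟩
  simp only [max_le_iff] at hR
  obtain ⟨l1, l2, l3, l4, l5, l6⟩ := hR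
  have nb4 : 0 ≤ ∫ x in CB ρ, b x ^ 4 := integral_nonneg fun x => by
    have := b0 x; positivity
  have nc4 : 0 ≤ ∫ x in CB ρ, c x ^ 4 := integral_nonneg fun x => by
    have := c0 x; positivity
  have na4 : 0 ≤ ∫ x in CB ρ, a x ^ 4 := integral_nonneg fun x => by
    have := a0 x; positivity
  have nb2 : 0 ≤ ∫ x in CB ρ, b x ^ 2 := integral_nonneg fun x => sq_nonneg _
  have nc2 : 0 ≤ ∫ x in CB ρ, c x ^ 2 := integral_nonneg fun x => sq_nonneg _
  have t1 := k1 R l1 ρ hρ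
  have t2 := k2 R l2 ρ W hρ hW hWX
  have t3 := k3 R l3 ρ W hρ hW hWX
  have t4 := k4 R l4 ρ W hρ hW hWX
  have t5 := k5 R l5 ρ hρ W _ hW nb4 ((A14 hb b0 hq1 ib hg bg hW hWX).1 (by linarith))
  have t6 := k6 R l6 ρ hρ W _ hW nc4 ((A14 hc c0 hr1 ic hg cg hW hWX).1 (by linarith))
  have hRp : 1 ≤ R := hR1.trans l1
  have hRi : R⁻¹ ≤ 1 := inv_le_one_of_one_le₀ hRp
  have hRi0 : 0 ≤ R⁻¹ := by positivity
  have e1 : ∫ x in CB ρ, (b x ^ 2 + c x ^ 2) = (∫ x in CB ρ, b x ^ 2) + ∫ x in CB ρ, c x ^ 2 :=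
    integral_add (intOn (by fun_prop) _) (intOn (by fun_prop) _)
  have e2 : ∫ x in CB ρ, (a x ^ 2 + (b x ^ 2 + c x ^ 2)) =
      (∫ x in CB ρ, a x ^ 2) + ∫ x in CB ρ, (b x ^ 2 + c x ^ 2) :=
    integral_add (intOn (by fun_prop) _) (intOn (by fun_prop) _)
  have e3 : ∫ x in CB ρ, (a x ^ 2 + (b x ^ 2 + c x ^ 2)) ^ 2 ≤
      3 * ((∫ x in CB ρ, a x ^ 4) + (∫ x in CB ρ, b x ^ 4) + ∫ x in CB ρ, c x ^ 4) := by
    rw [← integral_add (intOn (by fun_prop) _) (intOn (by fun_prop) _),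
      ← integral_add (intOn (by fun_prop) _) (intOn (by fun_prop) _), ← integral_const_mul]
    apply setInt_le (by fun_prop) (by fun_prop)
    intro x
    nlinarith [sq_nonneg (a x ^ 2 - b x ^ 2), sq_nonneg (a x ^ 2 - c x ^ 2), sq_nonneg (b x ^ 2 - c x ^ 2)]
  have e4 := sqrt3 na4 nb4 nc4 e3
  have e5 := mul_le_mul_of_nonneg_left (mul_le_mul_of_nonneg_left e4 (Real.sqrt_nonneg (∫ x in CB ρ, a x ^ 2))) hRi0
  have e6 : (R⁻¹) ^ 2 * ((∫ x in CB ρ, b x ^ 2) + ∫ x in CB ρ, c x ^ 2) ≤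
      R⁻¹ * ((∫ x in CB ρ, b x ^ 2) + ∫ x in CB ρ, c x ^ 2) := by
    apply mul_le_mul_of_nonneg_right _ (by positivity)
    nlinarith
  have hW3 : 1 ≤ W ^ 3 := one_le_pow₀ hW
  have e7 : δ ≤ δ * W ^ 3 := le_mul_of_one_le_right hδ.le hW3
  rw [e2, e1]
  have e8 : ε * W ^ 3 = 11 * (δ * W ^ 3) := by rw [hδε]; ring
  rw [e8]
  linarith

lemma iter_aux {y : ℕ → ℝ} {G M : ℝ} (hM : ∀ n, y n ≤ M)
    (h : ∀ n, y n ≤ 1 / 2 * y (n + 1) + G * (3 / 2) ^ n) : y 0 ≤ 4 * G := by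
  have key : ∀ n : ℕ, y 0 ≤ (1 / 2) ^ n * y n + 4 * G * (1 - (3 / 4) ^ n) := by
    intro n
    induction n with
    | zero => simp
    | succ n ih =>
      have h1 := mul_le_mul_of_nonneg_left (h n) (by positivity : (0:ℝ) ≤ (1 / 2) ^ n)
      have e : ((1:ℝ) / 2) ^ n * (3 / 2) ^ n = (3 / 4) ^ n := by rw [← mul_pow]; norm_num
      have e2 : ((1:ℝ) / 2) ^ n * (1 / 2 * y (n + 1) + G * (3 / 2) ^ n) =
          (1 / 2) ^ (n + 1) * y (n + 1) + G * (3 / 4) ^ n := by rw [← e]; ring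
      rw [e2] at h1
      have e3 : ((3:ℝ) / 4) ^ (n + 1) = 3 / 4 * (3 / 4) ^ n := by ring
      rw [e3]
      linarith
  have l1 : Tendsto (fun n : ℕ => ((1:ℝ) / 2) ^ n * M + 4 * G * (1 - (3 / 4) ^ n)) atTop
      (nhds (0 * M + 4 * G * (1 - 0))) := by
    apply Tendsto.add
    · exact (tendsto_pow_atTop_nhds_zero_of_lt_one (by norm_num) (by norm_num)).mul_const _
    · exact ((tendsto_pow_atTop_nhds_zero_of_lt_one (by norm_num) (by norm_num)).const_sub _).const_mul _
  have := ge_of_tendsto' l1 (fun n => (key n).trans (add_le_add_left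
    (mul_le_mul_of_nonneg_left (hM n) (by positivity : (0:ℝ) ≤ (1 / 2) ^ n)) _))
  linarith

lemma absorb {Y Y' A B W : ℝ} (hA : 0 ≤ A) (hB : 0 ≤ B) (hY' : 0 ≤ Y') (hW : 1 ≤ W)
    (h1 : Y ≤ A * W ^ 3) (h2 : W ^ 10 ≤ 1 + B * Y' ^ 3) :
    Y ≤ 1 / 2 * Y' + A * (1 + 8 * B * A ^ 3) ^ 3 := by
  have hH : 0 ≤ A * (1 + 8 * B * A ^ 3) ^ 3 := by positivity
  rcases le_total (A * W ^ 3) (1 / 2 * Y') with h | h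
  · linarith
  · have h3 : Y' ^ 3 ≤ (2 * (A * W ^ 3)) ^ 3 := pow_le_pow_left₀ hY' (by linarith) 3
    have h4 := mul_le_mul_of_nonneg_left h3 hB
    have h5 : 1 ≤ W ^ 9 := one_le_pow₀ hW
    have h6 : W ^ 9 * W ≤ W ^ 9 * (1 + 8 * B * A ^ 3) := by
      have : W ^ 9 * W = W ^ 10 := by ring
      have : B * (2 * (A * W ^ 3)) ^ 3 = W ^ 9 * (8 * B * A ^ 3) := by ring
      linarith
    have h7 : W ≤ 1 + 8 * B * A ^ 3 := le_of_mul_le_mul_left h6 (by positivity)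
    have h8 : W ^ 3 ≤ (1 + 8 * B * A ^ 3) ^ 3 := pow_le_pow_left₀ (by linarith) h7 3
    have := mul_le_mul_of_nonneg_left h8 hA
    linarith

def EB (u v : Fin 3 → R3 → ℝ) (θ : R3 → ℝ) (ε R : ℝ) : Prop :=
  ∀ ρ W, ρ ≤ 2 * R → 1 ≤ W → W ^ 10 = 1 + ∫ x in CB ρ, NN u v θ x ^ 3 →
      (R⁻¹) ^ 2 * (∫ x in CB ρ, NN u v θ x) +
      R⁻¹ * (√(∫ x in CB ρ, U2 u x) * √(∫ x in CB ρ, NN u v θ x ^ 2)) +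
      R⁻¹ * (∫ x in CB ρ, (U2 v x + θ x ^ 2)) ≤ ε * W ^ 3

def YY (u v : Fin 3 → R3 → ℝ) (θ : R3 → ℝ) (R ρ : ℝ) : ℝ :=
  (∫ x in CB ρ, DD u v θ x) + (R⁻¹) ^ 2 * ∫ x in CB ρ, NN u v θ x

lemma step : ∃ K : ℝ, 0 < K ∧ ∀ u v P θ, Sol u v P θ → ∀ ε R σ ρ, 0 ≤ ε → ε ≤ 1 → 0 < R → EB u v θ ε R →
    0 < σ → σ ≤ 1 → 0 ≤ ρ → ρ + 3 * (σ * R) ≤ 2 * R →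
    YY u v θ R ρ ≤ 1 / 2 * YY u v θ R (ρ + 3 * (σ * R)) + K * ε * (σ⁻¹) ^ 38 := by
  obtain ⟨C, hC, hca⟩ := cacc
  obtain ⟨C', hC', hso⟩ := sob
  refine ⟨(C + 1) * (1 + 8 * C' * (C + 1) ^ 3) ^ 3, by positivity, ?_⟩
  intro u v P θ S ε R σ ρ hε hε1 hR hE hσ hσ1 hρ hρR
  have cN := (NN_sm S).cont
  have cD := (DD_sm S).cont
  have nN : ∀ x, 0 ≤ NN u v θ x := fun x => NN_nonneg x
  have nD : ∀ x, 0 ≤ DD u v θ x := fun x => DD_nonneg x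
  set s := σ * R with hs
  have hs0 : 0 < s := by positivity
  have hsi : s⁻¹ = σ⁻¹ * R⁻¹ := by rw [hs, mul_inv]
  have hσi : 1 ≤ σ⁻¹ := (one_le_inv₀ hσ).mpr hσ1
  set k := σ⁻¹ with hk
  have hRi : 0 < R⁻¹ := by positivity
  set X := ∫ x in CB (ρ + s + s), NN u v θ x ^ 3 with hX
  have hX0 : 0 ≤ X := integral_nonneg fun x => pow_nonneg (nN x) 3
  obtain ⟨W, hW, hWX⟩ : ∃ W : ℝ, 1 ≤ W ∧ W ^ 10 = 1 + X := by
    refine ⟨(1 + X) ^ ((1:ℝ) / 10), Real.one_le_rpow (by linarith) (by norm_num), ?_⟩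
    rw [← Real.rpow_natCast, ← Real.rpow_mul (by linarith)]
    norm_num
  have hEE := hE (ρ + s + s) W (by linarith) hW hWX
  have h1 := hca u v P θ S ρ s hρ hs0
  have h2 := hso u v P θ S (ρ + s + s) s (by positivity) hs0
  have e3 : ρ + s + s + s = ρ + 3 * s := by ring
  rw [e3] at h2
  have hm := setInt_mono_r cN nN (by linarith : ρ ≤ ρ + s + s)
  have q1 : 0 ≤ ∫ x in CB (ρ + s + s), NN u v θ x := integral_nonneg nN
  have q3 : 0 ≤ ∫ x in CB (ρ + s + s), (U2 v x + θ x ^ 2) :=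
    integral_nonneg fun x => add_nonneg (U2_nonneg v x) (sq_nonneg _)
  have q2 : 0 ≤ √(∫ x in CB (ρ + s + s), U2 u x) * √(∫ x in CB (ρ + s + s), NN u v θ x ^ 2) := by positivity
  have q4 : 0 ≤ ∫ x in CB (ρ + 3 * s), NN u v θ x := integral_nonneg nN
  have q5 : 0 ≤ ∫ x in CB (ρ + 3 * s), DD u v θ x := integral_nonneg nD
  generalize (∫ x in CB (ρ + s + s), NN u v θ x) = I1 at *
  generalize (√(∫ x in CB (ρ + s + s), U2 u x) * √(∫ x in CB (ρ + s + s), NN u v θ x ^ 2)) = I2 at *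
  generalize (∫ x in CB (ρ + s + s), (U2 v x + θ x ^ 2)) = I3 at *
  rw [hsi] at h1 h2
  unfold YY
  generalize (∫ x in CB ρ, NN u v θ x) = J1 at *
  generalize (∫ x in CB ρ, DD u v θ x) = J2 at *
  generalize (∫ x in CB (ρ + 3 * s), NN u v θ x) = J3 at *
  generalize (∫ x in CB (ρ + 3 * s), DD u v θ x) = J4 at *
  have hk2 : 1 ≤ k ^ 2 := one_le_pow₀ hσi
  have hkk : k ≤ k ^ 2 := by nlinarith
  have hY : J2 + (R⁻¹) ^ 2 * J1 ≤ ((C + 1) * k ^ 2 * ε) * W ^ 3 := by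
    have a1 : (k * R⁻¹) ^ 2 * I1 = k ^ 2 * ((R⁻¹) ^ 2 * I1) := by ring
    have a2 : k * R⁻¹ * I2 ≤ k ^ 2 * (R⁻¹ * I2) := by
      rw [mul_assoc]; exact mul_le_mul_of_nonneg_right hkk (by positivity)
    have a3 : k * R⁻¹ * I3 ≤ k ^ 2 * (R⁻¹ * I3) := by
      rw [mul_assoc]; exact mul_le_mul_of_nonneg_right hkk (by positivity)
    have a4 : (k * R⁻¹) ^ 2 * I1 + k * R⁻¹ * I2 + k * R⁻¹ * I3 ≤ k ^ 2 * (ε * W ^ 3) := by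
      have := mul_le_mul_of_nonneg_left hEE (by positivity : 0 ≤ k ^ 2)
      linarith
    have a5 := h1.trans (mul_le_mul_of_nonneg_left a4 hC.le)
    have a6 : (R⁻¹) ^ 2 * J1 ≤ (R⁻¹) ^ 2 * I1 := mul_le_mul_of_nonneg_left hm (by positivity)
    have a7 : (R⁻¹) ^ 2 * I1 ≤ ε * W ^ 3 := by
      have : 0 ≤ R⁻¹ * I2 := by positivity
      have : 0 ≤ R⁻¹ * I3 := by positivity
      linarith
    have a8 : ε * W ^ 3 ≤ k ^ 2 * (ε * W ^ 3) := le_mul_of_one_le_left (by positivity) hk2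
    linarith
  have hWB : W ^ 10 ≤ 1 + (C' * k ^ 6) * (J4 + (R⁻¹) ^ 2 * J3) ^ 3 := by
    have b1 : J4 + (k * R⁻¹) ^ 2 * J3 ≤ k ^ 2 * (J4 + (R⁻¹) ^ 2 * J3) := by
      have := mul_le_mul_of_nonneg_right hk2 q5
      linarith
    have b2 := pow_le_pow_left₀ (by positivity) b1 3
    have b3 := h2.trans (mul_le_mul_of_nonneg_left b2 hC'.le)
    rw [hWX]
    linarith
  have hk0 : 0 ≤ k := by linarith
  have hab := absorb (by positivity) (by positivity) (by positivity) hW hY hWB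
  refine hab.trans (add_le_add_right ?_ _)
  have hk12 : 1 ≤ k ^ 12 := one_le_pow₀ hσi
  have c1 : 8 * (C' * k ^ 6) * ((C + 1) * k ^ 2 * ε) ^ 3 ≤ 8 * C' * (C + 1) ^ 3 * k ^ 12 := by
    have : ε ^ 3 ≤ 1 := pow_le_one₀ hε hε1
    have := mul_le_mul_of_nonneg_left this (by positivity : 0 ≤ 8 * C' * (C + 1) ^ 3 * k ^ 12)
    linarith
  have c2 : 1 + 8 * (C' * k ^ 6) * ((C + 1) * k ^ 2 * ε) ^ 3 ≤ (1 + 8 * C' * (C + 1) ^ 3) * k ^ 12 := by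
    linarith
  have c3 := pow_le_pow_left₀ (by positivity) c2 3
  have c4 := mul_le_mul_of_nonneg_left c3 (by positivity : 0 ≤ (C + 1) * k ^ 2 * ε)
  refine c4.trans (le_of_eq ?_)
  ring

lemma decay : ∃ K : ℝ, 0 < K ∧ ∀ u v P θ, Sol u v P θ → ∀ ε R, 0 ≤ ε → ε ≤ 1 → 0 < R → EB u v θ ε R →
    YY u v θ R R ≤ K * ε := by
  obtain ⟨K, hK, hst⟩ := step
  obtain ⟨τ, hτ0, hτ1, hτ⟩ : ∃ τ : ℝ, 0 < τ ∧ τ < 1 ∧ (τ⁻¹) ^ 38 ≤ 3 / 2 :=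
    ⟨99 / 100, by norm_num, by norm_num, by norm_num⟩
  set L := 3 / (1 - τ) with hL
  have h1τ : 0 < 1 - τ := by linarith
  have hL0 : 0 < L := by positivity
  refine ⟨4 * (K * L ^ 38), by positivity, fun u v P θ S ε R hε hε1 hR hE => ?_⟩
  have cN := (NN_sm S).cont
  have cD := (DD_sm S).cont
  have nN : ∀ x, 0 ≤ NN u v θ x := fun x => NN_nonneg x
  have nD : ∀ x, 0 ≤ DD u v θ x := fun x => DD_nonneg x
  let ρ : ℕ → ℝ := fun n => R + R * (1 - τ ^ n)
  have hτn : ∀ n : ℕ, 0 < τ ^ n ∧ τ ^ n ≤ 1 := fun n => ⟨by positivity, pow_le_one₀ hτ0.le hτ1.le⟩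
  have hρ2 : ∀ n, ρ n ≤ 2 * R := fun n => by
    have := mul_pos hR (hτn n).1
    simp only [ρ]; linarith
  have hρ0 : ∀ n, 0 ≤ ρ n := fun n => by
    have := mul_nonneg hR.le (sub_nonneg.mpr (hτn n).2)
    simp only [ρ]; linarith
  have := iter_aux (y := fun n => YY u v θ R (ρ n)) (G := K * L ^ 38 * ε) (M := YY u v θ R (2 * R)) ?_ ?_
  · simp only [ρ, pow_zero, sub_self, mul_zero, add_zero] at this
    linarith
  · intro n
    exact add_le_add (setInt_mono_r cD nD (hρ2 n))
      (mul_le_mul_of_nonneg_left (setInt_mono_r cN nN (hρ2 n)) (by positivity))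
  · intro n
    have hσ : 0 < τ ^ n / L := div_pos (hτn n).1 hL0
    have hσ1 : τ ^ n / L ≤ 1 := by
      rw [div_le_one hL0]
      refine (hτn n).2.trans ?_
      rw [hL, le_div_iff₀ h1τ]; linarith
    have e : ρ n + 3 * (τ ^ n / L * R) = ρ (n + 1) := by
      simp only [ρ, hL]
      field_simp
      ring
    have h := hst u v P θ S ε R (τ ^ n / L) (ρ n) hε hε1 hR hE hσ hσ1 (hρ0 n) (by rw [e]; exact hρ2 _)
    rw [e] at h
    refine h.trans (add_le_add_right ?_ _)
    have e2 : (τ ^ n / L)⁻¹ ^ 38 = L ^ 38 * ((τ⁻¹) ^ 38) ^ n := by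
      rw [inv_div, div_pow, ← pow_mul, ← pow_mul, inv_pow, mul_comm 38 n]; rfl
    rw [e2]
    have h3 : ((τ⁻¹) ^ 38) ^ n ≤ (3 / 2) ^ n := pow_le_pow_left₀ (by positivity) hτ n
    have h4 := mul_le_mul_of_nonneg_left h3 (by positivity : 0 ≤ K * ε * L ^ 38)
    linarith

lemma NN_zero {u v : Fin 3 → R3 → ℝ} {P θ : R3 → ℝ} (S : Sol u v P θ)
    (hE : ∀ ε, 0 < ε → ∃ R0 : ℝ, 1 ≤ R0 ∧ ∀ R, R0 ≤ R → EB u v θ ε R) : ∀ x, NN u v θ x = 0 := by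
  obtain ⟨K, hK, hd⟩ := decay
  obtain ⟨C, hC, hso⟩ := sob
  have cN := (NN_sm S).cont
  have cD := (DD_sm S).cont
  have nN : ∀ x, 0 ≤ NN u v θ x := fun x => NN_nonneg x
  have nD : ∀ x, 0 ≤ DD u v θ x := fun x => DD_nonneg x
  have n3 : ∀ x, 0 ≤ NN u v θ x ^ 3 := fun x => pow_nonneg (nN x) 3
  have c3 : Continuous (fun x => NN u v θ x ^ 3) := cN.pow 3
  have hz : ∀ r ε, 0 < ε → ε ≤ 1 → ∫ x in CB r, NN u v θ x ^ 3 ≤ C * (4 * K) ^ 3 * ε := by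
    intro r ε hε hε1
    obtain ⟨R0, hR0, h⟩ := hE ε hε
    set R := max R0 (2 * r)
    have hRR : R0 ≤ R := le_max_left _ _
    have hr : r ≤ R / 2 := by
      have : 2 * r ≤ R := le_max_right _ _
      linarith
    have hR : 0 < R := by linarith
    have h1 := hd u v P θ S ε R hε.le hε1 hR (h R hRR)
    have h2 := hso u v P θ S (R / 2) (R / 2) (by positivity) (by positivity)
    rw [add_halves] at h2
    refine (setInt_mono_r c3 n3 hr).trans (h2.trans ?_)
    have q4 : 0 ≤ ∫ x in CB R, NN u v θ x := integral_nonneg nN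
    have q5 : 0 ≤ ∫ x in CB R, DD u v θ x := integral_nonneg nD
    unfold YY at h1
    have e : (R / 2)⁻¹ = 2 * R⁻¹ := by rw [inv_div, div_eq_mul_inv]
    rw [e]
    have h3 : (∫ x in CB R, DD u v θ x) + (2 * R⁻¹) ^ 2 * (∫ x in CB R, NN u v θ x) ≤ 4 * K * ε := by
      linarith
    have h4 := mul_le_mul_of_nonneg_left (pow_le_pow_left₀ (by positivity) h3 3) hC.le
    refine h4.trans ?_
    have h5 : ε ^ 3 ≤ ε := by
      have := pow_le_pow_of_le_one hε.le hε1 (show 1 ≤ 3 by norm_num)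
      simpa using this
    have h6 := mul_le_mul_of_nonneg_left h5 (by positivity : 0 ≤ C * (4 * K) ^ 3)
    linarith
  have hz0 : ∀ r, ∫ x in CB r, NN u v θ x ^ 3 = 0 := by
    intro r
    apply le_antisymm _ (integral_nonneg n3)
    by_contra hX
    push Not at hX
    set X := ∫ x in CB r, NN u v θ x ^ 3
    have hC2 : 0 < C * (4 * K) ^ 3 := by positivity
    have h := hz r (min 1 (X / (2 * (C * (4 * K) ^ 3)))) (by positivity) (min_le_left _ _)
    have h2 := mul_le_mul_of_nonneg_left (min_le_right 1 (X / (2 * (C * (4 * K) ^ 3)))) hC2.le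
    have h3 : C * (4 * K) ^ 3 * (X / (2 * (C * (4 * K) ^ 3))) = X / 2 := by field_simp
    linarith
  intro x
  have h1 := (setIntegral_eq_zero_iff_of_nonneg_ae (μ := volume) (s := CB (‖x‖ + 1))
    (Eventually.of_forall n3) (intOn c3 _)).mp (hz0 _)
  have h2 : (fun x => NN u v θ x ^ 3) =ᵐ[volume.restrict (ball (0 : R3) (‖x‖ + 1))] fun _ => 0 :=
    ae_restrict_of_ae_restrict_of_subset ball_subset_closedBall h1
  have h3 := Measure.eqOn_open_of_ae_eq h2 isOpen_ball c3.continuousOn continuousOn_const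
  have h4 := h3 (show x ∈ ball (0 : R3) (‖x‖ + 1) by simp)
  exact pow_eq_zero_iff (by norm_num) |>.mp h4

theorem liouville_tcm_B1 (u v : R3 → R3) (pr θ : R3 → ℝ)
    (hu : ContDiff ℝ (⊤ : ℕ∞) u) (hv : ContDiff ℝ (⊤ : ℕ∞) v)
    (hpr : ContDiff ℝ (⊤ : ℕ∞) pr) (hθ : ContDiff ℝ (⊤ : ℕ∞) θ)
    (hsol : TCM u v pr θ)
    (p q r : ℝ)
    (hp1 : 3 ≤ p) (hp2 : p ≤ 9 / 2)
    (hq1 : 1 ≤ q) (hq2 : q < 2 * (p / (p - 1)))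
    (hr1 : 1 ≤ r) (hr2 : r < 2 * (p / (p - 1)))
    (hLu : (∫⁻ x : R3, ENNReal.ofReal (‖u x‖ ^ p)) < ⊤)
    (hLv : (∫⁻ x : R3, ENNReal.ofReal (‖v x‖ ^ q)) < ⊤)
    (hLθ : (∫⁻ x : R3, ENNReal.ofReal (|θ x| ^ r)) < ⊤) :
    (∀ x, u x = 0) ∧ (∀ x, v x = 0) ∧ (∀ x, θ x = 0) := by
  obtain ⟨t1, t2, t3, t4⟩ := hsol
  have S : Sol (fun i y => u y i) (fun i y => v y i) pr θ :=
    { su := fun i => contDiff_euclidean.mp hu i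
      sv := fun i => contDiff_euclidean.mp hv i
      sP := hpr
      sθ := hθ
      e1 := t1
      e2 := t2
      e3 := t3
      e4 := t4 }
  have nu : ∀ x, U2 (fun i y => u y i) x = ‖u x‖ ^ 2 := fun x => by
    simp [U2, EuclideanSpace.norm_sq_eq]
  have nv : ∀ x, U2 (fun i y => v y i) x = ‖v x‖ ^ 2 := fun x => by
    simp [U2, EuclideanSpace.norm_sq_eq]
  have mkI : ∀ {f : R3 → ℝ} {s : ℝ}, Continuous f → (∀ x, 0 ≤ f x) → 1 ≤ s →
      (∫⁻ x : R3, ENNReal.ofReal (f x ^ s)) < ⊤ → Integrable (fun x => f x ^ s) := by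
    intro f s hf h0 hs h
    refine ⟨(rp_cont hf hs).aestronglyMeasurable, ?_⟩
    rw [hasFiniteIntegral_iff_ofReal (Eventually.of_forall fun x => Real.rpow_nonneg (h0 x) _)]
    exact h
  have h3 : 2 * (p / (p - 1)) ≤ 3 := by
    rw [← mul_div_assoc, div_le_iff₀ (by linarith)]; linarith
  have cu : Continuous fun x => ‖u x‖ := hu.continuous.norm
  have cv : Continuous fun x => ‖v x‖ := hv.continuous.norm
  have cθ : Continuous fun x => |θ x| := hθ.continuous.abs
  have hN := NN_zero S (fun ε hε => by
    obtain ⟨R0, hR0, h⟩ := Ebound cu cv cθ (fun x => norm_nonneg _) (fun x => norm_nonneg _)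
      (fun x => abs_nonneg _) hp1 hp2 hq1 (hq2.trans_le h3) hr1 (hr2.trans_le h3)
      (mkI cu (fun x => norm_nonneg _) (by linarith) hLu) (mkI cv (fun x => norm_nonneg _) hq1 hLv)
      (mkI cθ (fun x => abs_nonneg _) hr1 hLθ) hε
    refine ⟨R0, hR0, fun R hR ρ W hρ hW hWX => ?_⟩
    have := h R hR ρ W hρ hW
    simp only [NN, nu, nv] at hWX ⊢
    simp only [sq_abs] at this
    exact this hWX)
  simp only [NN, nu, nv] at hN
  refine ⟨fun x => ?_, fun x => ?_, fun x => ?_⟩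
  · have := hN x
    have h : ‖u x‖ ^ 2 = 0 := by nlinarith [sq_nonneg ‖u x‖, sq_nonneg ‖v x‖, sq_nonneg (θ x)]
    simpa using h
  · have := hN x
    have h : ‖v x‖ ^ 2 = 0 := by nlinarith [sq_nonneg ‖u x‖, sq_nonneg ‖v x‖, sq_nonneg (θ x)]
    simpa using h
  · have := hN x
    have h : θ x ^ 2 = 0 := by nlinarith [sq_nonneg ‖u x‖, sq_nonneg ‖v x‖, sq_nonneg (θ x)]
    simpa using h
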